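/- arXiv:2604.11597 — 6 statements merged into one kernel-verified Lean document; each statement's English description precedes it below -/
import Mathlib

section
/- Let f : ℝ → ℝ be a smooth double-well potential: f ∈ C^∞(ℝ), f even, f(±1) = 0, f'(±1) = 0, f''(±1) > 0, and f > 0 on (−1,1). Then the ODE θ₀''(ρ) = f'(θ₀(ρ)) for all ρ ∈ ℝ, with lim_{ρ→±∞} θ₀(ρ) = ±1 and θ₀(0) = 0, has a unique solution θ₀ (the optimal profile). Moreover, with α := min(√(f''(1)), √(f''(−1))), for every k ∈ ℕ₀ there is C_k > 0 such that |d^k/dρ^k ( θ₀(ρ) − 1 )| ≤ C_k e^{−α|ρ|} for ρ ≥ 0 and |d^k/dρ^k ( θ₀(ρ) + 1 )| ≤ C_k e^{−α|ρ|} for ρ ≤ 0. -/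
open Real Filter

/-!
Multiplying `θ'' = f'(θ)` by `θ'` shows that `θ'² - 2 f(θ)` is conserved, and the limit `1` of `θ`
at `+∞` forces it to vanish. An optimal profile is thus found by solving `θ' = √(2 f(θ))`, that
is, by inverting the travel time `G(x) = ∫₀ˣ 1 / √(2 f)`; conversely every solution has
`θ'(0) = ±√(2 f(0))`, and the minus sign is excluded because the reflected profile ends in the
wrong well.

With `α = √(f''(1))`, Taylor's formula shows that `1 / √(2 f(x))` and `1 / (α (1 - x))` differ by
a bounded amount near `1`, so `α G(x) + log (1 - x)` is bounded there. Hence `G` blows up at the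
well, and inserting `x = θ(ρ)`, where `G(θ(ρ)) = ρ`, gives `1 - θ(ρ) = O(exp (-α ρ))` with no loss
in the rate. The derivatives of `θ - 1` have the form `q(θ) + p(θ) θ'` with `q(1) = 0`, and both
`q(θ)` and `θ' = √(2 f(θ))` are `O(1 - θ)`, so they inherit the rate. The well at `-1` is the same
statement for the potential `x ↦ f(-x)` and the profile `ρ ↦ -θ(-ρ)`.
-/

section Asymptotics

open Set Topology Asymptotics

variable {E : Type*} [NormedAddCommGroup E]

theorem exists_forall_norm_le_mul_of_isBigO_atTop {F : ℝ → E} {g : ℝ → ℝ} {a : ℝ}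
    (hF : ContinuousOn F (Ici a)) (hg : ContinuousOn g (Ici a)) (hg_pos : ∀ x ≥ a, 0 < g x)
    (hFg : F =O[atTop] g) : ∃ C > 0, ∀ x ≥ a, ‖F x‖ ≤ C * g x := by
  obtain ⟨C, hC, hFC⟩ := hFg.exists_pos
  obtain ⟨b, hb⟩ := eventually_atTop.1 hFC.bound
  have h_ratio : ContinuousOn (fun x => ‖F x‖ / g x) (Icc a b) :=
    (hF.norm.div hg fun x hx => (hg_pos x hx).ne').mono Icc_subset_Ici_self
  obtain ⟨K, hK⟩ := isCompact_Icc.exists_bound_of_continuousOn h_ratio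
  refine ⟨max C K, lt_max_of_lt_left hC, fun x hx => ?_⟩
  have hgx := hg_pos x hx
  rcases le_total b x with hbx | hxb
  · calc ‖F x‖ ≤ C * ‖g x‖ := hb x hbx
      _ = C * g x := by rw [Real.norm_of_nonneg hgx.le]
      _ ≤ max C K * g x := by gcongr; exact le_max_left _ _
  · calc ‖F x‖ ≤ K * g x := (div_le_iff₀ hgx).1 ((le_abs_self _).trans (hK x ⟨hx, hxb⟩))
      _ ≤ max C K * g x := by gcongr; exact le_max_right _ _

variable [NormedSpace ℝ E]

theorem isBigO_one_nhdsLT_of_hasDerivAt {h h' : ℝ → E} {b : ℝ}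
    (hh : ∀ᶠ x in 𝓝[<] b, HasDerivAt h (h' x) x) (hh' : h' =O[𝓝[<] b] (1 : ℝ → ℝ)) :
    h =O[𝓝[<] b] (1 : ℝ → ℝ) := by
  obtain ⟨C, hC⟩ := hh'.bound
  obtain ⟨a, hab : a < b, hI⟩ := mem_nhdsLT_iff_exists_Ioo_subset.1 (hh.and hC)
  obtain ⟨c, hc⟩ := nonempty_Ioo.2 hab
  refine IsBigO.of_bound (C * (b - a) + ‖h c‖) ?_
  filter_upwards [Ioo_mem_nhdsLT hab] with x hx
  have h_bound : ∀ y ∈ Ioo a b, ‖h' y‖ ≤ C := fun y hy => by simpa using (hI hy).2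
  have h_mean : ‖h x - h c‖ ≤ C * ‖x - c‖ :=
    (convex_Ioo a b).norm_image_sub_le_of_norm_hasDerivWithin_le
      (fun y hy => (hI hy).1.hasDerivWithinAt) h_bound hc hx
  have h_dist : ‖x - c‖ ≤ b - a :=
    abs_le.2 ⟨by linarith [hx.1, hc.2], by linarith [hx.2, hc.1]⟩
  calc ‖h x‖ ≤ ‖h x - h c‖ + ‖h c‖ := norm_le_norm_sub_add _ _
    _ ≤ C * (b - a) + ‖h c‖ := by
      gcongr
      exact h_mean.trans (mul_le_mul_of_nonneg_left h_dist ((norm_nonneg _).trans (h_bound c hc)))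
    _ = (C * (b - a) + ‖h c‖) * ‖(1 : ℝ → ℝ) x‖ := by simp

theorem taylor_isBigO_univ {f : ℝ → E} {n : ℕ} (hf : ContDiff ℝ (n + 1 : ℕ) f) (x₀ : ℝ) :
    (fun x => f x - taylorWithinEval f n univ x₀ x) =O[𝓝 x₀] fun x => (x - x₀) ^ (n + 1) := by
  have h_next := (taylor_isLittleO_univ (x₀ := x₀) hf).isBigO
  simp only [taylorWithinEval_succ f n, ← sub_sub] at h_next
  have h_term (c : ℝ) (v : E) :
      (fun x => (c * (x - x₀) ^ (n + 1)) • v) =O[𝓝 x₀] fun x => (x - x₀) ^ (n + 1) :=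
    .of_bound (‖c‖ * ‖v‖) (.of_forall fun x => by rw [norm_smul, norm_mul, mul_right_comm])
  exact (h_next.add (h_term _ _)).congr_left fun x => sub_add_cancel _ _

theorem exists_seq_tendsto_atTop_deriv_tendsto_zero {θ : ℝ → ℝ} {l : ℝ} (hθ : Differentiable ℝ θ)
    (h_lim : Tendsto θ atTop (𝓝 l)) :
    ∃ ξ : ℕ → ℝ, Tendsto ξ atTop atTop ∧ Tendsto (fun n => deriv θ (ξ n)) atTop (𝓝 0) := by
  have h_slope (n : ℕ) : ∃ ξ ∈ Ioo (n : ℝ) (n + 1), deriv θ ξ = θ (n + 1) - θ n := by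
    simpa using exists_deriv_eq_slope θ (lt_add_one (n : ℝ)) hθ.continuous.continuousOn
      hθ.differentiableOn
  choose ξ hξ h_deriv using h_slope
  refine ⟨ξ, tendsto_atTop_mono (fun n => (hξ n).1.le) tendsto_natCast_atTop_atTop, ?_⟩
  have h_nat : Tendsto (fun n : ℕ => θ n) atTop (𝓝 l) := h_lim.comp tendsto_natCast_atTop_atTop
  have h_succ : Tendsto (fun n : ℕ => θ (n + 1)) atTop (𝓝 l) := by
    simpa using (tendsto_add_atTop_iff_nat 1).2 h_nat
  simpa [h_deriv] using h_succ.sub h_nat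

end Asymptotics

section Autonomous

variable {E : Type*} [NormedAddCommGroup E] [NormedSpace ℝ E]

theorem eq_of_hasDerivAt_of_contDiff {v : E → E} (hv : ContDiff ℝ 1 v) {γ η : ℝ → E}
    (hγ : ∀ t, HasDerivAt γ (v (γ t)) t) (hη : ∀ t, HasDerivAt η (v (η t)) t) {t₀ : ℝ}
    (h₀ : γ t₀ = η t₀) : γ = η := by
  have hγ_cont : Continuous γ := continuous_iff_continuousAt.2 fun t => (hγ t).continuousAt
  have hη_cont : Continuous η := continuous_iff_continuousAt.2 fun t => (hη t).continuousAt
  have h_open : IsOpen {t | γ t = η t} := by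
    refine isOpen_iff_mem_nhds.2 fun t (ht : γ t = η t) => ?_
    obtain ⟨K, s, hs, hK⟩ := hv.contDiffAt.exists_lipschitzOnWith (x := γ t)
    exact ODE_solution_unique_of_eventually (v := fun _ => v) (s := fun _ => s)
      (.of_forall fun _ => hK)
      ((hγ_cont.continuousAt.eventually hs).mono fun r hr => ⟨hγ r, hr⟩)
      ((hη_cont.continuousAt.eventually (ht ▸ hs)).mono fun r hr => ⟨hη r, hr⟩) ht
  have h_univ := IsClopen.eq_univ ⟨isClosed_eq hγ_cont hη_cont, h_open⟩ ⟨t₀, h₀⟩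
  exact funext fun t => h_univ.ge (Set.mem_univ t)

theorem eq_of_hasDerivAt_deriv_of_contDiff {F : E → E} (hF : ContDiff ℝ 1 F) {θ η : ℝ → E}
    (hθ : Differentiable ℝ θ) (hθ' : ∀ t, HasDerivAt (deriv θ) (F (θ t)) t)
    (hη : Differentiable ℝ η) (hη' : ∀ t, HasDerivAt (deriv η) (F (η t)) t) {t₀ : ℝ}
    (h₀ : θ t₀ = η t₀) (h₀' : deriv θ t₀ = deriv η t₀) : θ = η := by
  have h_phase : (fun t => (θ t, deriv θ t)) = fun t => (η t, deriv η t) :=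
    eq_of_hasDerivAt_of_contDiff (v := fun p => (p.2, F p.1))
      (contDiff_snd.prodMk (hF.comp contDiff_fst))
      (fun t => (hθ t).hasDerivAt.prodMk (hθ' t)) (fun t => (hη t).hasDerivAt.prodMk (hη' t))
      (Prod.ext h₀ h₀')
  exact funext fun t => congrArg Prod.fst (congrFun h_phase t)

end Autonomous

section Well

open Set Topology Asymptotics

variable {f : ℝ → ℝ} {b : ℝ}

theorem isBigO_two_mul_sub_of_critical_zero (hf : ContDiff ℝ 3 f) (hfb : f b = 0)
    (hf'b : deriv f b = 0) :
    (fun x => 2 * f x - iteratedDeriv 2 f b * (x - b) ^ 2) =O[𝓝 b] fun x => (x - b) ^ 3 := by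
  have h_taylor (x : ℝ) :
      taylorWithinEval f 2 univ b x = 2⁻¹ * (x - b) ^ 2 * iteratedDeriv 2 f b := by
    simp [taylorWithinEval_succ, iteratedDeriv_one, iteratedDerivWithin_univ, hfb, hf'b,
      one_add_one_eq_two]
  refine ((taylor_isBigO_univ (n := 2) hf b).const_mul_left 2).congr_left fun x => ?_
  rw [h_taylor]
  ring

theorem isBigO_sqrt_two_mul_of_critical_zero (hf : ContDiff ℝ 3 f) (hfb : f b = 0)
    (hf'b : deriv f b = 0) : (fun x => √(2 * f x)) =O[𝓝 b] fun x => x - b := by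
  have h_cube : (fun x => (x - b) ^ 3) =O[𝓝 b] fun x => (x - b) ^ 2 := by
    simpa only [← norm_pow, isBigO_norm_norm] using
      (isLittleO_pow_sub_pow_sub b (by norm_num : 2 < 3)).isBigO
  have h_sq : (fun x => 2 * f x) =O[𝓝 b] fun x => (x - b) ^ 2 := by
    simpa using ((isBigO_two_mul_sub_of_critical_zero hf hfb hf'b).trans h_cube).add
      ((isBigO_refl (fun x => (x - b) ^ 2) (𝓝 b)).const_mul_left (iteratedDeriv 2 f b))
  have h_sqrt := h_sq.sqrt (.of_forall fun x => sq_nonneg (x - b))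
  simpa only [Real.sqrt_sq_eq_abs, isBigO_abs_right] using h_sqrt

theorem abs_inv_sub_inv_le {g k : ℝ} (hk : 0 < k) (hkg : k / 2 ≤ g) :
    |g⁻¹ - k⁻¹| ≤ 2 * |g ^ 2 - k ^ 2| / k ^ 3 := by
  have hg : 0 < g := (half_pos hk).trans_le hkg
  calc |g⁻¹ - k⁻¹| = |-(g ^ 2 - k ^ 2) / (g * k * (g + k))| := by
        congr 1
        field_simp
        ring
    _ = |g ^ 2 - k ^ 2| / (g * k * (g + k)) := by
        rw [abs_div, abs_neg, abs_of_pos (a := g * k * (g + k)) (by positivity)]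
    _ ≤ |g ^ 2 - k ^ 2| / (k / 2 * k * (0 + k)) := by gcongr
    _ = 2 * |g ^ 2 - k ^ 2| / k ^ 3 := by field_simp; ring

theorem isBigO_inv_sqrt_sub_inv {F : ℝ → ℝ} {A : ℝ} (hA : 0 < A)
    (hF : (fun x => F x - A * (x - b) ^ 2) =O[𝓝[<] b] fun x => (x - b) ^ 3) :
    (fun x => (√(F x))⁻¹ - (√A * (b - x))⁻¹) =O[𝓝[<] b] (1 : ℝ → ℝ) := by
  obtain ⟨M, hFM⟩ := hF.bound
  have h_small : ∀ᶠ x in 𝓝[<] b, M * (b - x) < 3 / 4 * A :=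
    nhdsWithin_le_nhds <|
      ContinuousAt.eventually_lt (by fun_prop) (by fun_prop) (by simpa using hA)
  refine .of_bound (2 * M / √A ^ 3) ?_
  filter_upwards [hFM, h_small, self_mem_nhdsWithin] with x hx hx_small (hxb : x < b)
  obtain ⟨t, rfl⟩ : ∃ t, x = b - t := ⟨b - x, by ring⟩
  have ht : 0 < t := by linarith
  simp only [sub_sub_cancel, sub_sub_cancel_left, neg_sq, Real.norm_eq_abs, abs_pow,
    abs_neg, abs_of_pos ht] at hx hx_small ⊢
  have hF_lower : (√A * t / 2) ^ 2 ≤ F (b - t) := by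
    have h_cube : M * t ^ 3 ≤ 3 / 4 * A * t ^ 2 := by
      nlinarith [mul_le_mul_of_nonneg_right hx_small.le (sq_nonneg t)]
    rw [div_pow, mul_pow, Real.sq_sqrt hA.le]
    linarith [(abs_le.1 hx).1]
  have hk : 0 < √A * t := mul_pos (Real.sqrt_pos.2 hA) ht
  calc |(√(F (b - t)))⁻¹ - (√A * t)⁻¹|
      ≤ 2 * |√(F (b - t)) ^ 2 - (√A * t) ^ 2| / (√A * t) ^ 3 :=
        abs_inv_sub_inv_le hk (Real.le_sqrt_of_sq_le hF_lower)
    _ = 2 * |F (b - t) - A * t ^ 2| / (√A * t) ^ 3 := by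
        rw [Real.sq_sqrt ((sq_nonneg _).trans hF_lower), mul_pow, Real.sq_sqrt hA.le]
    _ ≤ 2 * (M * t ^ 3) / (√A * t) ^ 3 := by gcongr
    _ = 2 * M / √A ^ 3 * |(1 : ℝ → ℝ) (b - t)| := by
        rw [Pi.one_apply, abs_one]
        field_simp

end Well

section TravelTime

open Set Topology Asymptotics

/-- The time a solution of the autonomous equation `θ' = v θ` needs to move from `x₀` to `x`. -/
noncomputable def travelTime (v : ℝ → ℝ) (x₀ x : ℝ) : ℝ := ∫ t in x₀..x, (v t)⁻¹

theorem travelTime_self (v : ℝ → ℝ) (x₀ : ℝ) : travelTime v x₀ x₀ = 0 :=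
  intervalIntegral.integral_same

theorem travelTime_comp_neg (v : ℝ → ℝ) (x₀ x : ℝ) :
    travelTime (fun t => v (-t)) (-x₀) (-x) = -travelTime v x₀ x := by
  rw [travelTime, intervalIntegral.integral_comp_neg fun t => (v t)⁻¹, neg_neg, neg_neg,
    intervalIntegral.integral_symm, travelTime]

variable {v : ℝ → ℝ} {a b x₀ : ℝ}

theorem hasDerivAt_travelTime (hv : ContinuousOn v (Ioo a b)) (hv_pos : ∀ x ∈ Ioo a b, 0 < v x)
    (hx₀ : x₀ ∈ Ioo a b) {x : ℝ} (hx : x ∈ Ioo a b) :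
    HasDerivAt (travelTime v x₀) (v x)⁻¹ x := by
  have h_inv : ContinuousOn (fun t => (v t)⁻¹) (Ioo a b) := hv.inv₀ fun t ht => (hv_pos t ht).ne'
  exact intervalIntegral.integral_hasDerivAt_right
    (h_inv.mono (ordConnected_Ioo.uIcc_subset hx₀ hx)).intervalIntegrable
    (h_inv.stronglyMeasurableAtFilter isOpen_Ioo x hx)
    (h_inv.continuousAt (isOpen_Ioo.mem_nhds hx))

theorem strictMonoOn_travelTime (hv : ContinuousOn v (Ioo a b))
    (hv_pos : ∀ x ∈ Ioo a b, 0 < v x) (hx₀ : x₀ ∈ Ioo a b) :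
    StrictMonoOn (travelTime v x₀) (Ioo a b) := by
  have h_deriv {x : ℝ} (hx : x ∈ Ioo a b) := hasDerivAt_travelTime hv hv_pos hx₀ hx
  refine strictMonoOn_of_deriv_pos (convex_Ioo a b)
    (HasDerivAt.continuousOn fun x hx => h_deriv hx) fun x hx => ?_
  rw [interior_Ioo] at hx
  simpa [(h_deriv hx).deriv] using hv_pos x hx

theorem exists_hasDerivAt_of_tendsto_travelTime (hv : ContinuousOn v (Ioo a b))
    (hv_pos : ∀ x ∈ Ioo a b, 0 < v x) (hx₀ : x₀ ∈ Ioo a b)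
    (h_top : Tendsto (travelTime v x₀) (𝓝[<] b) atTop)
    (h_bot : Tendsto (travelTime v x₀) (𝓝[>] a) atBot) :
    ∃ θ : ℝ → ℝ, (∀ ρ, θ ρ ∈ Ioo a b) ∧ (∀ ρ, HasDerivAt θ (v (θ ρ)) ρ) ∧ θ 0 = x₀ ∧
      Tendsto θ atTop (𝓝 b) ∧ Tendsto θ atBot (𝓝 a) := by
  have hab : a < b := hx₀.1.trans hx₀.2
  have h_deriv {x : ℝ} (hx : x ∈ Ioo a b) := hasDerivAt_travelTime hv hv_pos hx₀ hx
  have h_mono := strictMonoOn_travelTime hv hv_pos hx₀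
  have h_surj : SurjOn (travelTime v x₀) (Ioo a b) univ :=
    ContinuousOn.surjOn_of_tendsto ⟨x₀, hx₀⟩ (HasDerivAt.continuousOn fun x hx => h_deriv hx)
      ((tendsto_comp_coe_Ioo_atBot hab).2 h_bot) ((tendsto_comp_coe_Ioo_atTop hab).2 h_top)
  let e : Ioo a b ≃o ℝ := StrictMono.orderIsoOfSurjective (fun x => travelTime v x₀ x)
    h_mono.domRestrict (surjOn_iff_surjective.1 h_surj)
  have h_inverse (ρ : ℝ) : travelTime v x₀ (e.symm ρ) = ρ := e.apply_symm_apply ρ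
  refine ⟨fun ρ => e.symm ρ, fun ρ => (e.symm ρ).2, fun ρ => ?_, ?_, ?_, ?_⟩
  · have h_cont : Continuous fun ρ => (e.symm ρ : ℝ) :=
      continuous_subtype_val.comp e.symm.continuous
    simpa using HasDerivAt.of_local_left_inverse h_cont.continuousAt (h_deriv (e.symm ρ).2)
      (inv_pos.2 (hv_pos _ (e.symm ρ).2)).ne' (.of_forall h_inverse)
  · exact h_mono.injOn (e.symm 0).2 hx₀ (by rw [h_inverse, travelTime_self])
  · exact ((tendsto_Ioo_atTop ..).1 e.symm.tendsto_atTop).mono_right nhdsWithin_le_nhds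
  · exact ((tendsto_Ioo_atBot ..).1 e.symm.tendsto_atBot).mono_right nhdsWithin_le_nhds

theorem travelTime_apply_solution (hv : ContinuousOn v (Ioo a b))
    (hv_pos : ∀ x ∈ Ioo a b, 0 < v x) {θ : ℝ → ℝ} (hθ_mem : ∀ ρ, θ ρ ∈ Ioo a b)
    (hθ : ∀ ρ, HasDerivAt θ (v (θ ρ)) ρ) (ρ : ℝ) : travelTime v (θ 0) (θ ρ) = ρ := by
  have h_deriv (r : ℝ) : HasDerivAt (fun s => travelTime v (θ 0) (θ s) - s) 0 r := by
    have h_time := (hasDerivAt_travelTime hv hv_pos (hθ_mem 0) (hθ_mem r)).comp r (hθ r)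
    simpa [(hv_pos _ (hθ_mem r)).ne'] using! h_time.sub (hasDerivAt_id r)
  have h_const := is_const_of_deriv_eq_zero (fun r => (h_deriv r).differentiableAt)
    (fun r => (h_deriv r).deriv) ρ 0
  simpa [travelTime_self, sub_eq_zero] using h_const

theorem isBigO_mul_travelTime_add_log {α : ℝ} (hα : α ≠ 0) (hv : ContinuousOn v (Ioo a b))
    (hv_pos : ∀ x ∈ Ioo a b, 0 < v x) (hx₀ : x₀ ∈ Ioo a b)
    (h_inv : (fun x => (v x)⁻¹ - (α * (b - x))⁻¹) =O[𝓝[<] b] (1 : ℝ → ℝ)) :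
    (fun x => α * travelTime v x₀ x + log (b - x)) =O[𝓝[<] b] (1 : ℝ → ℝ) := by
  refine isBigO_one_nhdsLT_of_hasDerivAt ?_ (h_inv.const_mul_left α)
  filter_upwards [Ioo_mem_nhdsLT (hx₀.1.trans hx₀.2)] with x hx
  have hbx : b - x ≠ 0 := (sub_pos.2 hx.2).ne'
  refine (((hasDerivAt_travelTime hv hv_pos hx₀ hx).const_mul α).add
    (((hasDerivAt_id x).const_sub b).log hbx)).congr_deriv ?_
  rw [mul_sub, mul_inv, mul_inv_cancel_left₀ hα, neg_div, one_div, ← sub_eq_add_neg, id]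

theorem tendsto_travelTime_nhdsLT {α : ℝ} (hα : 0 < α)
    (h_log : (fun x => α * travelTime v x₀ x + log (b - x)) =O[𝓝[<] b] (1 : ℝ → ℝ)) :
    Tendsto (travelTime v x₀) (𝓝[<] b) atTop := by
  obtain ⟨C, hC⟩ := h_log.bound
  have h_dist : Tendsto (fun x => b - x) (𝓝[<] b) (𝓝[>] 0) :=
    tendsto_nhdsWithin_iff.2 ⟨(Continuous.tendsto' (by fun_prop) b 0 (sub_self b)).mono_left
      nhdsWithin_le_nhds, eventually_mem_nhdsWithin.mono fun x hx => mem_Ioi.2 (sub_pos.2 hx)⟩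
  have h_neg_log : Tendsto (fun x => -log (b - x)) (𝓝[<] b) atTop :=
    tendsto_neg_atBot_atTop.comp (tendsto_log_nhdsGT_zero.comp h_dist)
  have h_bound : ∀ᶠ x in 𝓝[<] b, -C ≤ α * travelTime v x₀ x + log (b - x) :=
    hC.mono fun x hx => (abs_le.1 (by simpa using hx)).1
  have h_mul : Tendsto (fun x => α * travelTime v x₀ x) (𝓝[<] b) atTop := by
    simpa using tendsto_atTop_add_left_of_le' _ _ h_bound h_neg_log
  exact (tendsto_const_mul_atTop_of_pos hα).1 h_mul

theorem isBigO_sub_exp_of_travelTime_eq {α : ℝ} {θ : ℝ → ℝ}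
    (h_log : (fun x => α * travelTime v x₀ x + log (b - x)) =O[𝓝[<] b] (1 : ℝ → ℝ))
    (hθ_lim : Tendsto θ atTop (𝓝[<] b)) (hθ : ∀ ρ, travelTime v x₀ (θ ρ) = ρ) :
    (fun ρ => θ ρ - b) =O[atTop] fun ρ => exp (-α * ρ) := by
  have h_bdd : IsBoundedUnder (· ≤ ·) atTop
      ((fun ρ => log (b - θ ρ)) - fun ρ => -α * ρ) := by
    obtain ⟨C, hC⟩ := (h_log.comp_tendsto hθ_lim).bound
    refine isBoundedUnder_of_eventually_le (a := C) (hC.mono fun ρ hρ => ?_)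
    have h_le := (le_abs_self _).trans (by simpa [hθ] using hρ)
    simpa [add_comm] using h_le
  have h_exp_log : ∀ᶠ ρ in atTop, exp (log (b - θ ρ)) = -(θ ρ - b) := by
    filter_upwards [hθ_lim.eventually self_mem_nhdsWithin] with ρ (hρ : θ ρ < b)
    rw [exp_log (sub_pos.2 hρ), neg_sub]
  exact isBigO_neg_left.1 ((isBigO_exp_comp_exp_comp.2 h_bdd).congr' h_exp_log .rfl)

end TravelTime

section DoubleWell

open Set Topology Asymptotics

/-- Smooth potentials that are positive on `(-1, 1)` and have nondegenerate wells of height zero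
at `±1`. -/
structure IsDoubleWell (f : ℝ → ℝ) : Prop where
  contDiff : ContDiff ℝ (⊤ : ℕ∞) f
  apply_one : f 1 = 0
  apply_neg_one : f (-1) = 0
  deriv_one : deriv f 1 = 0
  deriv_neg_one : deriv f (-1) = 0
  iteratedDeriv_two_one_pos : 0 < iteratedDeriv 2 f 1
  iteratedDeriv_two_neg_one_pos : 0 < iteratedDeriv 2 f (-1)
  pos : ∀ x ∈ Ioo (-1 : ℝ) 1, 0 < f x

/-- An optimal profile: a `C²` solution of `θ'' = f'(θ)` that connects the wells `-1` and `1` and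
is centred at `0`. -/
def IsOptimalProfile (f θ : ℝ → ℝ) : Prop :=
  ContDiff ℝ 2 θ ∧ (∀ ρ, deriv (deriv θ) ρ = deriv f (θ ρ)) ∧
    Tendsto θ atTop (𝓝 1) ∧ Tendsto θ atBot (𝓝 (-1)) ∧ θ 0 = 0

/-- A centred connection between the wells that solves the first-order equation `θ' = √(2 f(θ))`,
in which kinetic and potential energy are equal. -/
structure IsFirstOrderProfile (f θ : ℝ → ℝ) : Prop where
  mem_Ioo : ∀ ρ, θ ρ ∈ Ioo (-1 : ℝ) 1
  hasDerivAt : ∀ ρ, HasDerivAt θ (√(2 * f (θ ρ))) ρ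
  apply_zero : θ 0 = 0
  tendsto_atTop : Tendsto θ atTop (𝓝 1)
  tendsto_atBot : Tendsto θ atBot (𝓝 (-1))

theorem IsFirstOrderProfile.comp_neg {f θ : ℝ → ℝ} (hθ : IsFirstOrderProfile f θ) :
    IsFirstOrderProfile (fun x => f (-x)) fun ρ => -θ (-ρ) where
  mem_Ioo ρ := ⟨neg_lt_neg (hθ.mem_Ioo (-ρ)).2, neg_lt.1 (hθ.mem_Ioo (-ρ)).1⟩
  hasDerivAt ρ := by simpa using! ((hθ.hasDerivAt (-ρ)).scomp ρ (hasDerivAt_neg ρ)).neg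
  apply_zero := by simp [hθ.apply_zero]
  tendsto_atTop := by simpa using (hθ.tendsto_atBot.comp tendsto_neg_atTop_atBot).neg
  tendsto_atBot := (hθ.tendsto_atTop.comp tendsto_neg_atBot_atTop).neg

namespace IsDoubleWell

variable {f : ℝ → ℝ}

theorem comp_neg (hf : IsDoubleWell f) : IsDoubleWell fun x => f (-x) where
  contDiff := hf.contDiff.comp contDiff_neg
  apply_one := hf.apply_neg_one
  apply_neg_one := by simpa using hf.apply_one
  deriv_one := by simp [deriv_comp_neg, hf.deriv_neg_one]
  deriv_neg_one := by simp [deriv_comp_neg, hf.deriv_one]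
  iteratedDeriv_two_one_pos := by
    simpa [iteratedDeriv_comp_neg] using hf.iteratedDeriv_two_neg_one_pos
  iteratedDeriv_two_neg_one_pos := by
    simpa [iteratedDeriv_comp_neg] using hf.iteratedDeriv_two_one_pos
  pos x hx := hf.pos (-x) ⟨neg_lt_neg hx.2, neg_lt.1 hx.1⟩

theorem continuous_sqrt_two_mul (hf : IsDoubleWell f) : Continuous fun x => √(2 * f x) :=
  (hf.contDiff.continuous.const_mul 2).sqrt

theorem sqrt_two_mul_pos (hf : IsDoubleWell f) {x : ℝ} (hx : x ∈ Ioo (-1) 1) :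
    0 < √(2 * f x) :=
  Real.sqrt_pos.2 (mul_pos two_pos (hf.pos x hx))

theorem isBigO_mul_travelTime_add_log (hf : IsDoubleWell f) :
    (fun x => √(iteratedDeriv 2 f 1) * travelTime (fun t => √(2 * f t)) 0 x + log (1 - x))
      =O[𝓝[<] 1] (1 : ℝ → ℝ) := by
  refine _root_.isBigO_mul_travelTime_add_log (a := -1)
    (Real.sqrt_pos.2 hf.iteratedDeriv_two_one_pos).ne' hf.continuous_sqrt_two_mul.continuousOn
    (fun x hx => hf.sqrt_two_mul_pos hx) (by norm_num) ?_
  exact isBigO_inv_sqrt_sub_inv hf.iteratedDeriv_two_one_pos <|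
    (isBigO_two_mul_sub_of_critical_zero (contDiff_infty.1 hf.contDiff 3) hf.apply_one
      hf.deriv_one).mono nhdsWithin_le_nhds

theorem tendsto_travelTime_one (hf : IsDoubleWell f) :
    Tendsto (travelTime (fun t => √(2 * f t)) 0) (𝓝[<] 1) atTop :=
  tendsto_travelTime_nhdsLT (Real.sqrt_pos.2 hf.iteratedDeriv_two_one_pos)
    hf.isBigO_mul_travelTime_add_log

theorem tendsto_travelTime_neg_one (hf : IsDoubleWell f) :
    Tendsto (travelTime (fun t => √(2 * f t)) 0) (𝓝[>] (-1)) atBot := by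
  have h_neg : Tendsto (fun x : ℝ => -x) (𝓝[>] (-1)) (𝓝[<] 1) := by
    simpa using tendsto_neg_nhdsGT (a := (-1 : ℝ))
  refine (tendsto_neg_atTop_atBot.comp (hf.comp_neg.tendsto_travelTime_one.comp h_neg)).congr
    fun x => ?_
  simpa [neg_eq_iff_eq_neg] using travelTime_comp_neg (fun t => √(2 * f t)) 0 x

theorem exists_isFirstOrderProfile (hf : IsDoubleWell f) : ∃ θ, IsFirstOrderProfile f θ := by
  obtain ⟨θ, h_mem, h_deriv, h_zero, h_top, h_bot⟩ :=
    exists_hasDerivAt_of_tendsto_travelTime hf.continuous_sqrt_two_mul.continuousOn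
      (fun x hx => hf.sqrt_two_mul_pos hx) (by norm_num) hf.tendsto_travelTime_one
      hf.tendsto_travelTime_neg_one
  exact ⟨θ, h_mem, h_deriv, h_zero, h_top, h_bot⟩

end IsDoubleWell

end DoubleWell

section SecondOrder

open Topology Asymptotics

variable {f θ : ℝ → ℝ}

theorem deriv_sq_eq_two_mul_of_tendsto {l : ℝ} (hf : Differentiable ℝ f) (hfl : f l = 0)
    (hθ : Differentiable ℝ θ) (hθ' : ∀ ρ, HasDerivAt (deriv θ) (deriv f (θ ρ)) ρ)
    (h_lim : Tendsto θ atTop (𝓝 l)) (ρ : ℝ) : deriv θ ρ ^ 2 = 2 * f (θ ρ) := by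
  let energy (r : ℝ) : ℝ := deriv θ r ^ 2 - 2 * f (θ r)
  have h_deriv (r : ℝ) : HasDerivAt energy 0 r := by
    have h_pot := (hf (θ r)).hasDerivAt.comp r (hθ r).hasDerivAt
    refine (((hθ' r).pow 2).sub (h_pot.const_mul 2)).congr_deriv ?_
    push_cast
    ring
  have h_const (r : ℝ) : energy r = energy ρ :=
    is_const_of_deriv_eq_zero (fun s => (h_deriv s).differentiableAt)
      (fun s => (h_deriv s).deriv) r ρ
  obtain ⟨ξ, hξ, hξ_deriv⟩ := exists_seq_tendsto_atTop_deriv_tendsto_zero hθ h_lim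
  have h_pot : Tendsto (fun n => f (θ (ξ n))) atTop (𝓝 0) :=
    hfl ▸ (hf.continuous.tendsto l).comp (h_lim.comp hξ)
  have h_energy : Tendsto (fun n => energy (ξ n)) atTop (𝓝 0) := by
    simpa using (hξ_deriv.pow 2).sub (h_pot.const_mul 2)
  simp only [h_const] at h_energy
  exact sub_eq_zero.1 (tendsto_nhds_unique tendsto_const_nhds h_energy)

theorem exists_iteratedDeriv_sub_eq {b : ℝ} (hf : ContDiff ℝ (⊤ : ℕ∞) f) (hfb : f b = 0)
    (hf'b : deriv f b = 0) (hθ : Differentiable ℝ θ)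
    (hθ' : ∀ ρ, HasDerivAt (deriv θ) (deriv f (θ ρ)) ρ)
    (h_energy : ∀ ρ, deriv θ ρ ^ 2 = 2 * f (θ ρ)) (k : ℕ) :
    ∃ p q : ℝ → ℝ, ContDiff ℝ (⊤ : ℕ∞) p ∧ ContDiff ℝ (⊤ : ℕ∞) q ∧ q b = 0 ∧
      iteratedDeriv k (fun ρ => θ ρ - b) = fun ρ => q (θ ρ) + p (θ ρ) * deriv θ ρ := by
  induction k with
  | zero =>
    exact ⟨fun _ => 0, fun x => x - b, contDiff_const, contDiff_id.sub contDiff_const, sub_self b,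
      by simp⟩
  | succ k ih =>
    obtain ⟨p, q, hp, hq, -, h_eq⟩ := ih
    obtain ⟨hp_diff, hp'⟩ := contDiff_infty_iff_deriv.1 hp
    obtain ⟨hq_diff, hq'⟩ := contDiff_infty_iff_deriv.1 hq
    refine ⟨deriv q, fun x => deriv p x * (2 * f x) + p x * deriv f x, hq',
      (hp'.mul (contDiff_const.mul hf)).add (hp.mul (contDiff_infty_iff_deriv.1 hf).2),
      by simp [hfb, hf'b], ?_⟩
    rw [iteratedDeriv_succ, h_eq]
    funext ρ
    have hqθ := hq_diff.differentiableAt.hasDerivAt.comp ρ (hθ ρ).hasDerivAt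
    have hpθ := hp_diff.differentiableAt.hasDerivAt.comp ρ (hθ ρ).hasDerivAt
    refine (hqθ.add (hpθ.mul (hθ' ρ))).deriv.trans ?_
    simp only [Function.comp_apply, ← h_energy]
    ring

namespace IsOptimalProfile

theorem differentiable (hθ : IsOptimalProfile f θ) : Differentiable ℝ θ :=
  hθ.1.differentiable two_ne_zero

theorem hasDerivAt_deriv (hθ : IsOptimalProfile f θ) (ρ : ℝ) :
    HasDerivAt (deriv θ) (deriv f (θ ρ)) ρ :=
  hθ.2.1 ρ ▸ (hθ.1.differentiable_deriv_two ρ).hasDerivAt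

variable {η : ℝ → ℝ}

theorem unique (hf : ContDiff ℝ 2 f) (hf1 : f 1 = 0) (hθ : IsOptimalProfile f θ)
    (hη : IsOptimalProfile f η) : θ = η := by
  have ⟨_, _, hθ_top, _, hθ_zero⟩ := hθ
  have ⟨_, _, hη_top, hη_bot, hη_zero⟩ := hη
  have hf_diff : Differentiable ℝ f := hf.differentiable two_ne_zero
  have hf' : ContDiff ℝ 1 (deriv f) := ((contDiff_succ_iff_deriv (n := 1)).1 hf).2.2
  have h_zero : θ 0 = η 0 := hθ_zero.trans hη_zero.symm
  have h_sq : deriv θ 0 ^ 2 = deriv η 0 ^ 2 := by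
    rw [deriv_sq_eq_two_mul_of_tendsto hf_diff hf1 hθ.differentiable hθ.hasDerivAt_deriv hθ_top,
      deriv_sq_eq_two_mul_of_tendsto hf_diff hf1 hη.differentiable hη.hasDerivAt_deriv hη_top,
      h_zero]
  rcases sq_eq_sq_iff_eq_or_eq_neg.1 h_sq with h_same | h_opp
  · exact eq_of_hasDerivAt_deriv_of_contDiff hf' hθ.differentiable hθ.hasDerivAt_deriv
      hη.differentiable hη.hasDerivAt_deriv h_zero h_same
  -- With the opposite slope, `θ` is the reflection of `η`, which runs into the wrong well.
  have hη_neg : deriv (fun t => η (-t)) = fun t => -deriv η (-t) :=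
    funext fun t => deriv_comp_neg ..
  have h_refl : θ = fun t => η (-t) := by
    refine eq_of_hasDerivAt_deriv_of_contDiff (t₀ := 0) hf' hθ.differentiable hθ.hasDerivAt_deriv
      (hη.differentiable.comp differentiable_neg) (fun t => ?_) (by simpa using h_zero)
      (by simpa [hη_neg] using h_opp)
    rw [hη_neg]
    simpa using! ((hη.hasDerivAt_deriv (-t)).scomp t (hasDerivAt_neg t)).neg
  have h_wrong : Tendsto θ atTop (𝓝 (-1)) := h_refl ▸ hη_bot.comp tendsto_neg_atTop_atBot
  exact absurd (tendsto_nhds_unique hθ_top h_wrong) (by norm_num)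

end IsOptimalProfile

namespace IsFirstOrderProfile

theorem differentiable (hθ : IsFirstOrderProfile f θ) : Differentiable ℝ θ :=
  fun ρ => (hθ.hasDerivAt ρ).differentiableAt

theorem deriv_eq (hθ : IsFirstOrderProfile f θ) : deriv θ = fun ρ => √(2 * f (θ ρ)) :=
  funext fun ρ => (hθ.hasDerivAt ρ).deriv

theorem hasDerivAt_deriv (hθ : IsFirstOrderProfile f θ) (hf : IsDoubleWell f) (ρ : ℝ) :
    HasDerivAt (deriv θ) (deriv f (θ ρ)) ρ := by
  have h_speed := hf.sqrt_two_mul_pos (hθ.mem_Ioo ρ)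
  have hf' : HasDerivAt f (deriv f (θ ρ)) (θ ρ) :=
    (hf.contDiff.differentiable (by simp)).differentiableAt.hasDerivAt
  rw [hθ.deriv_eq]
  refine (((hf'.comp ρ (hθ.hasDerivAt ρ)).const_mul 2).sqrt
    (Real.sqrt_pos.1 h_speed).ne').congr_deriv ?_
  simp only [Function.comp_apply]
  field_simp

theorem deriv_sq (hθ : IsFirstOrderProfile f θ) (hf : IsDoubleWell f) (ρ : ℝ) :
    deriv θ ρ ^ 2 = 2 * f (θ ρ) := by
  rw [hθ.deriv_eq, Real.sq_sqrt (mul_pos two_pos (hf.pos _ (hθ.mem_Ioo ρ))).le]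

theorem isOptimalProfile (hθ : IsFirstOrderProfile f θ) (hf : IsDoubleWell f) :
    IsOptimalProfile f θ := by
  have h_deriv₂ : deriv (deriv θ) = fun ρ => deriv f (θ ρ) :=
    funext fun ρ => (hθ.hasDerivAt_deriv hf ρ).deriv
  have h_cont : Continuous (deriv (deriv θ)) := by
    rw [h_deriv₂]
    exact (hf.contDiff.continuous_deriv (by simp)).comp hθ.differentiable.continuous
  have h_contDiff : ContDiff ℝ 2 θ := (contDiff_succ_iff_deriv (n := 1)).2
    ⟨hθ.differentiable, by simp,
      contDiff_one_iff_deriv.2 ⟨fun ρ => (hθ.hasDerivAt_deriv hf ρ).differentiableAt, h_cont⟩⟩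
  exact ⟨h_contDiff, congrFun h_deriv₂, hθ.tendsto_atTop, hθ.tendsto_atBot, hθ.apply_zero⟩

theorem isBigO_sub_one (hθ : IsFirstOrderProfile f θ) (hf : IsDoubleWell f) :
    (fun ρ => θ ρ - 1) =O[atTop] fun ρ => exp (-√(iteratedDeriv 2 f 1) * ρ) := by
  have h_lim : Tendsto θ atTop (𝓝[<] 1) :=
    tendsto_nhdsWithin_iff.2 ⟨hθ.tendsto_atTop, .of_forall fun ρ => (hθ.mem_Ioo ρ).2⟩
  refine isBigO_sub_exp_of_travelTime_eq hf.isBigO_mul_travelTime_add_log h_lim fun ρ => ?_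
  simpa only [hθ.apply_zero] using
    travelTime_apply_solution hf.continuous_sqrt_two_mul.continuousOn
      (fun x hx => hf.sqrt_two_mul_pos hx) hθ.mem_Ioo hθ.hasDerivAt ρ

theorem isBigO_deriv (hθ : IsFirstOrderProfile f θ) (hf : IsDoubleWell f) :
    deriv θ =O[atTop] fun ρ => θ ρ - 1 := by
  rw [hθ.deriv_eq]
  exact (isBigO_sqrt_two_mul_of_critical_zero (contDiff_infty.1 hf.contDiff 3) hf.apply_one
    hf.deriv_one).comp_tendsto hθ.tendsto_atTop

theorem exists_norm_iteratedDeriv_sub_one_le (hθ : IsFirstOrderProfile f θ) (hf : IsDoubleWell f)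
    (k : ℕ) : ∃ C > 0, ∀ ρ ≥ 0,
      ‖iteratedDeriv k (fun r => θ r - 1) ρ‖ ≤ C * exp (-√(iteratedDeriv 2 f 1) * ρ) := by
  obtain ⟨p, q, hp, hq, hq1, h_eq⟩ := exists_iteratedDeriv_sub_eq hf.contDiff hf.apply_one
    hf.deriv_one hθ.differentiable (hθ.hasDerivAt_deriv hf) (hθ.deriv_sq hf) k
  have hqθ : (fun ρ => q (θ ρ)) =O[atTop] fun ρ => θ ρ - 1 := by
    simpa [hq1] using! (hq.differentiable (by simp) 1).isBigO_sub.comp_tendsto hθ.tendsto_atTop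
  have hpθ : (fun ρ => p (θ ρ)) =O[atTop] (1 : ℝ → ℝ) :=
    ((hp.continuous.tendsto 1).comp hθ.tendsto_atTop).isBigO_one ℝ
  have h_decay : iteratedDeriv k (fun r => θ r - 1) =O[atTop] fun ρ => θ ρ - 1 := by
    rw [h_eq]
    exact hqθ.add (by simpa using hpθ.mul (hθ.isBigO_deriv hf))
  have h_cont : Continuous (iteratedDeriv k fun r => θ r - 1) := by
    have hθ_cont := hθ.differentiable.continuous
    have hθ'_cont := (hθ.isOptimalProfile hf).1.continuous_deriv one_le_two
    rw [h_eq]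
    exact (hq.continuous.comp hθ_cont).add ((hp.continuous.comp hθ_cont).mul hθ'_cont)
  exact exists_forall_norm_le_mul_of_isBigO_atTop h_cont.continuousOn (by fun_prop)
    (fun _ _ => exp_pos _) (h_decay.trans (hθ.isBigO_sub_one hf))

theorem exists_norm_iteratedDeriv_add_one_le (hθ : IsFirstOrderProfile f θ) (hf : IsDoubleWell f)
    (k : ℕ) : ∃ C > 0, ∀ ρ ≤ 0,
      ‖iteratedDeriv k (fun r => θ r + 1) ρ‖ ≤ C * exp (√(iteratedDeriv 2 f (-1)) * ρ) := by
  obtain ⟨C, hC, h_le⟩ := hθ.comp_neg.exists_norm_iteratedDeriv_sub_one_le hf.comp_neg k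
  refine ⟨C, hC, fun ρ hρ => ?_⟩
  have h_refl : (fun r => -θ (-r) - 1) = -fun r => (fun s => θ s + 1) (-r) :=
    funext fun r => (neg_add' (θ (-r)) 1).symm
  have h_norm : ‖iteratedDeriv k (fun r => -θ (-r) - 1) (-ρ)‖ =
      ‖iteratedDeriv k (fun r => θ r + 1) ρ‖ := by
    rw [h_refl, iteratedDeriv_neg, iteratedDeriv_comp_neg k fun s => θ s + 1]
    simp
  have h_rate : √(iteratedDeriv 2 (fun x => f (-x)) 1) = √(iteratedDeriv 2 f (-1)) := by
    simp [iteratedDeriv_comp_neg]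
  simpa only [h_norm, h_rate, neg_mul_neg] using h_le (-ρ) (neg_nonneg.2 hρ)

end IsFirstOrderProfile

end SecondOrder

theorem optimal_profile_exists_unique_decay_general {f : ℝ → ℝ} (hf : IsDoubleWell f) :
    ∃ θ₀ : ℝ → ℝ, IsOptimalProfile f θ₀ ∧ (∀ θ, IsOptimalProfile f θ → θ = θ₀) ∧
      ∀ k : ℕ, ∃ C > 0,
        (∀ ρ : ℝ, 0 ≤ ρ → |iteratedDeriv k (fun x => θ₀ x - 1) ρ| ≤
          C * exp (-(min √(iteratedDeriv 2 f 1) √(iteratedDeriv 2 f (-1))) * |ρ|)) ∧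
        (∀ ρ : ℝ, ρ ≤ 0 → |iteratedDeriv k (fun x => θ₀ x + 1) ρ| ≤
          C * exp (-(min √(iteratedDeriv 2 f 1) √(iteratedDeriv 2 f (-1))) * |ρ|)) := by
  obtain ⟨θ₀, hθ₀⟩ := hf.exists_isFirstOrderProfile
  have h_profile := hθ₀.isOptimalProfile hf
  refine ⟨θ₀, h_profile,
    fun θ hθ => hθ.unique (contDiff_infty.1 hf.contDiff 2) hf.apply_one h_profile, fun k => ?_⟩
  obtain ⟨C₁, hC₁, h_right⟩ := hθ₀.exists_norm_iteratedDeriv_sub_one_le hf k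
  obtain ⟨C₂, -, h_left⟩ := hθ₀.exists_norm_iteratedDeriv_add_one_le hf k
  refine ⟨max C₁ C₂, lt_max_of_lt_left hC₁, fun ρ hρ => (h_right ρ hρ).trans ?_,
    fun ρ hρ => (h_left ρ hρ).trans ?_⟩
  · rw [abs_of_nonneg hρ]
    gcongr
    exacts [le_max_left _ _, min_le_left _ _]
  · rw [abs_of_nonpos hρ, neg_mul_neg]
    refine mul_le_mul (le_max_right _ _) (exp_le_exp.2 ?_) (exp_pos _).le (by positivity)
    exact mul_le_mul_of_nonpos_right (min_le_right _ _) hρ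

/-- Existence, uniqueness and exponential decay of the optimal profile θ₀, the unique
solution of θ₀'' = f'(θ₀) with θ₀(±∞) = ±1 and θ₀(0) = 0, for a smooth double-well
potential f. -/
theorem optimal_profile_exists_unique_decay
    (f : ℝ → ℝ)
    (hf : ContDiff ℝ (⊤ : ℕ∞) f)
    (hfeven : ∀ x, f (-x) = f x)
    (hf1 : f 1 = 0) (hfm1 : f (-1) = 0)
    (hf'1 : deriv f 1 = 0) (hf'm1 : deriv f (-1) = 0)
    (hf''1 : 0 < iteratedDeriv 2 f 1) (hf''m1 : 0 < iteratedDeriv 2 f (-1))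
    (hfpos : ∀ x ∈ Set.Ioo (-1:ℝ) 1, 0 < f x) :
    ∃ θ₀ : ℝ → ℝ,
      (ContDiff ℝ 2 θ₀ ∧ (∀ ρ, deriv (deriv θ₀) ρ = deriv f (θ₀ ρ)) ∧
        Tendsto θ₀ atTop (nhds 1) ∧ Tendsto θ₀ atBot (nhds (-1)) ∧ θ₀ 0 = 0) ∧
      (∀ θ : ℝ → ℝ,
        (ContDiff ℝ 2 θ ∧ (∀ ρ, deriv (deriv θ) ρ = deriv f (θ ρ)) ∧
          Tendsto θ atTop (nhds 1) ∧ Tendsto θ atBot (nhds (-1)) ∧ θ 0 = 0) → θ = θ₀) ∧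
      (∀ k : ℕ, ∃ C > 0,
        (∀ ρ : ℝ, 0 ≤ ρ →
          |iteratedDeriv k (fun x => θ₀ x - 1) ρ| ≤
            C * Real.exp (-(min (Real.sqrt (iteratedDeriv 2 f 1))
              (Real.sqrt (iteratedDeriv 2 f (-1)))) * |ρ|)) ∧
        (∀ ρ : ℝ, ρ ≤ 0 →
          |iteratedDeriv k (fun x => θ₀ x + 1) ρ| ≤
            C * Real.exp (-(min (Real.sqrt (iteratedDeriv 2 f 1))
              (Real.sqrt (iteratedDeriv 2 f (-1)))) * |ρ|))) :=
  optimal_profile_exists_unique_decay_general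
    ⟨hf, hf1, hfm1, hf'1, hf'm1, hf''1, hf''m1, hfpos⟩
end

section
/- Let f be a smooth double-well potential (f ∈ C^∞(ℝ), even, f(±1) = 0, f'(±1) = 0, f''(±1) > 0, f > 0 on (−1,1)) and θ₀ the optimal profile. Then θ₀ satisfies the first-integral identity θ₀'(ρ)² = 2 f(θ₀(ρ)) for all ρ ∈ ℝ, and consequently the surface tension constant σ := ∫_ℝ θ₀'(ρ)² dρ satisfies σ = ∫_{−1}^{1} √(2 f(s)) ds. -/
open Real Filter

/-!
Along a solution of `u'' = W'(u)` the energy `u'² - 2 W(u)` is conserved. If `u → b` at `+∞`, the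
mean value theorem gives times going to `+∞` along which `u' → 0`, so the energy is `-2 W(b)`.

If also `u → a ≠ b` at `-∞`, then `u'` never vanishes: the equation is invariant under time
reversal, so by uniqueness a solution with `u'(t₀) = 0` is symmetric about `t₀` and has the same
limit at both ends. Hence for `a < b` we have `u' = √(2 (W(u) - W(b))) > 0`, and the substitution
`s = u(t)` turns `∫ u'² dt` into `∫ √(2 (W(s) - W(b))) ds` over `[a, b]`.
-/

open scoped Topology

theorem eq_of_hasDerivAt_of_locallyLipschitz {E : Type*} [NormedAddCommGroup E] [NormedSpace ℝ E]
    {X : E → E} (hX : LocallyLipschitz X) {γ η : ℝ → E} (hγ : ∀ t, HasDerivAt γ (X (γ t)) t)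
    (hη : ∀ t, HasDerivAt η (X (η t)) t) {t₀ : ℝ} (h : γ t₀ = η t₀) : γ = η := by
  have hγc : Continuous γ := continuous_iff_continuousAt.2 fun t ↦ (hγ t).continuousAt
  have hηc : Continuous η := continuous_iff_continuousAt.2 fun t ↦ (hη t).continuousAt
  have hopen : IsOpen {t | γ t = η t} := by
    refine isOpen_iff_mem_nhds.2 fun t (ht : γ t = η t) ↦ ?_
    obtain ⟨K, U, hU, hK⟩ := hX (γ t)
    exact ODE_solution_unique_of_eventually (v := fun _ ↦ X) (s := fun _ ↦ U)
      (.of_forall fun _ ↦ hK)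
      ((hγc.continuousAt.eventually_mem hU).mono fun s hs ↦ ⟨hγ s, hs⟩)
      ((hηc.continuousAt.eventually_mem (ht ▸ hU)).mono fun s hs ↦ ⟨hη s, hs⟩) ht
  have huniv := IsClopen.eq_univ ⟨isClosed_eq hγc hηc, hopen⟩ ⟨t₀, h⟩
  exact funext (Set.eq_univ_iff_forall.1 huniv)

theorem exists_seq_tendsto_hasDerivAt_zero {u v : ℝ → ℝ} {b : ℝ}
    (hu : ∀ t, HasDerivAt u (v t) t) (htop : Tendsto u atTop (𝓝 b)) :
    ∃ ξ : ℕ → ℝ, Tendsto ξ atTop atTop ∧ Tendsto (fun n ↦ v (ξ n)) atTop (𝓝 0) := by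
  have hslope (n : ℕ) : ∃ ξ : ℝ, n < ξ ∧ v ξ = u (n + 1) - u n := by
    obtain ⟨ξ, hξ, h⟩ := exists_hasDerivAt_eq_slope u v (lt_add_one (n : ℝ))
      (HasDerivAt.continuousOn fun t _ ↦ hu t) fun t _ ↦ hu t
    exact ⟨ξ, hξ.1, by simpa using h⟩
  choose ξ hξ hvξ using hslope
  refine ⟨ξ, tendsto_atTop_mono (fun n ↦ (hξ n).le) tendsto_natCast_atTop_atTop, ?_⟩
  have hn : Tendsto (fun n : ℕ ↦ u n) atTop (𝓝 b) := htop.comp tendsto_natCast_atTop_atTop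
  have hn' : Tendsto (fun n : ℕ ↦ u (n + 1)) atTop (𝓝 b) := by
    simpa using (tendsto_add_atTop_iff_nat 1).2 hn
  simpa only [hvξ, sub_self] using hn'.sub hn

theorem integral_hasDerivAt_smul_comp_of_monotone {E : Type*} [NormedAddCommGroup E]
    [NormedSpace ℝ E] {u v : ℝ → ℝ} {a b : ℝ} (hu : ∀ t, HasDerivAt u (v t) t) (hmono : Monotone u)
    (hbot : Tendsto u atBot (𝓝 a)) (htop : Tendsto u atTop (𝓝 b)) (g : ℝ → E) :
    ∫ t, v t • g (u t) = ∫ s in a..b, g s := by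
  have hcont : Continuous u := continuous_iff_continuousAt.2 fun t ↦ (hu t).continuousAt
  have hle (t : ℝ) : a ≤ u t := hmono.le_of_tendsto hbot t
  have hge (t : ℝ) : u t ≤ b := hmono.ge_of_tendsto htop t
  have hsub : Set.Ioo a b ⊆ Set.range u := fun s hs ↦
    mem_range_of_exists_le_of_exists_ge hcont
      ((hbot.eventually_lt_const hs.1).exists.imp fun _ ↦ le_of_lt)
      ((htop.eventually_const_lt hs.2).exists.imp fun _ ↦ le_of_lt)
  have hsup : Set.range u ⊆ Set.Icc a b := Set.range_subset_iff.2 fun t ↦ ⟨hle t, hge t⟩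
  have hrange : Set.range u =ᵐ[MeasureTheory.volume] Set.Ioc a b :=
    (hsup.eventuallyLE.trans MeasureTheory.Ioc_ae_eq_Icc.symm.le).antisymm
      (MeasureTheory.Ioo_ae_eq_Ioc.symm.le.trans hsub.eventuallyLE)
  calc ∫ t, v t • g (u t) = ∫ s in Set.range u, g s := by
        rw [← Set.image_univ, MeasureTheory.integral_image_eq_integral_deriv_smul_of_monotoneOn
          MeasurableSet.univ (fun t _ ↦ (hu t).hasDerivWithinAt) (hmono.monotoneOn _),
          MeasureTheory.setIntegral_univ]
    _ = ∫ s in a..b, g s := by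
        rw [MeasureTheory.setIntegral_congr_set hrange,
          intervalIntegral.integral_of_le ((hle 0).trans (hge 0))]

/-- `u` solves Newton's equation `u'' = F(u)` on the whole line, with velocity `u' = v`. Carrying
the velocity separately makes `(u, v)` a solution of a first-order system. -/
structure IsNewtonTrajectory {E : Type*} [NormedAddCommGroup E] [NormedSpace ℝ E]
    (F : E → E) (u v : ℝ → E) : Prop where
  hasDerivAt_position : ∀ t, HasDerivAt u (v t) t
  hasDerivAt_velocity : ∀ t, HasDerivAt v (F (u t)) t

namespace IsNewtonTrajectory

section NormedSpace

variable {E : Type*} [NormedAddCommGroup E] [NormedSpace ℝ E] {F : E → E} {u v : ℝ → E}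

theorem of_deriv_deriv (hu : Differentiable ℝ u) (hv : Differentiable ℝ (deriv u))
    (hODE : ∀ t, deriv (deriv u) t = F (u t)) : IsNewtonTrajectory F u (deriv u) where
  hasDerivAt_position t := (hu t).hasDerivAt
  hasDerivAt_velocity t := hODE t ▸ (hv t).hasDerivAt

theorem comp_const_sub (h : IsNewtonTrajectory F u v) (c : ℝ) :
    IsNewtonTrajectory F (fun t ↦ u (c - t)) (fun t ↦ -v (c - t)) where
  hasDerivAt_position t := (h.hasDerivAt_position (c - t)).comp_const_sub c t
  hasDerivAt_velocity t :=
    ((h.hasDerivAt_velocity (c - t)).comp_const_sub c t).neg.congr_deriv (neg_neg _)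

theorem position_eq (hF : LocallyLipschitz F) (h : IsNewtonTrajectory F u v) {u₁ v₁ : ℝ → E}
    (h₁ : IsNewtonTrajectory F u₁ v₁) {t₀ : ℝ} (hu : u t₀ = u₁ t₀) (hv : v t₀ = v₁ t₀) :
    u = u₁ := by
  have hX : LocallyLipschitz fun p : E × E ↦ (p.2, F p.1) :=
    LipschitzWith.prod_snd.locallyLipschitz.prodMk
      (hF.comp LipschitzWith.prod_fst.locallyLipschitz)
  have hphase : (fun t ↦ (u t, v t)) = fun t ↦ (u₁ t, v₁ t) :=
    eq_of_hasDerivAt_of_locallyLipschitz hX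
      (fun t ↦ (h.hasDerivAt_position t).prodMk (h.hasDerivAt_velocity t))
      (fun t ↦ (h₁.hasDerivAt_position t).prodMk (h₁.hasDerivAt_velocity t))
      (Prod.ext hu hv)
  exact funext fun t ↦ congrArg Prod.fst (congrFun hphase t)

theorem position_two_mul_sub (hF : LocallyLipschitz F) (h : IsNewtonTrajectory F u v) {t₀ : ℝ}
    (hv : v t₀ = 0) (t : ℝ) : u (2 * t₀ - t) = u t := by
  have ht₀ : 2 * t₀ - t₀ = t₀ := by ring
  exact congrFun ((h.comp_const_sub (2 * t₀)).position_eq hF h (t₀ := t₀)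
    (by rw [ht₀]) (by rw [ht₀, hv, neg_zero])) t

theorem velocity_ne_zero (hF : LocallyLipschitz F) (h : IsNewtonTrajectory F u v) {a b : E}
    (hab : a ≠ b) (hbot : Tendsto u atBot (𝓝 a)) (htop : Tendsto u atTop (𝓝 b)) (t : ℝ) :
    v t ≠ 0 := by
  intro hv
  have hrefl : Tendsto (fun s ↦ u (2 * t - s)) atTop (𝓝 a) :=
    hbot.comp (tendsto_atBot_add_const_left _ _ tendsto_neg_atTop_atBot)
  simp only [h.position_two_mul_sub hF hv] at hrefl
  exact hab (tendsto_nhds_unique hrefl htop)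

end NormedSpace

theorem norm_velocity_sq_sub_eq {E : Type*} [NormedAddCommGroup E] [InnerProductSpace ℝ E]
    [CompleteSpace E] {F : E → E} {W : E → ℝ} {u v : ℝ → E} (hW : ∀ x, HasGradientAt W (F x) x)
    (h : IsNewtonTrajectory F u v) (s t : ℝ) :
    ‖v s‖ ^ 2 - 2 * W (u s) = ‖v t‖ ^ 2 - 2 * W (u t) := by
  have henergy (r : ℝ) : HasDerivAt (fun r ↦ ‖v r‖ ^ 2 - 2 * W (u r)) 0 r := by
    have hkinetic := (h.hasDerivAt_velocity r).norm_sq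
    have hpotential := (hW (u r)).hasFDerivAt.comp_hasDerivAt r (h.hasDerivAt_position r)
    refine (hkinetic.sub (hpotential.const_mul 2)).congr_deriv ?_
    simp [real_inner_comm]
  exact is_const_of_deriv_eq_zero (fun r ↦ (henergy r).differentiableAt)
    (fun r ↦ (henergy r).deriv) s t

section Real

variable {W w u v : ℝ → ℝ} {a b : ℝ}

theorem velocity_sq_eq (hW : ∀ x, HasDerivAt W (w x) x) (h : IsNewtonTrajectory w u v)
    (htop : Tendsto u atTop (𝓝 b)) (t : ℝ) : v t ^ 2 = 2 * (W (u t) - W b) := by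
  obtain ⟨ξ, hξ, hvξ⟩ := exists_seq_tendsto_hasDerivAt_zero h.hasDerivAt_position htop
  have hWξ : Tendsto (fun n ↦ W (u (ξ n))) atTop (𝓝 (W b)) :=
    (hW b).continuousAt.tendsto.comp (htop.comp hξ)
  have henergy (n : ℕ) : v (ξ n) ^ 2 - 2 * W (u (ξ n)) = v t ^ 2 - 2 * W (u t) := by
    simpa using h.norm_velocity_sq_sub_eq (fun x ↦ (hW x).hasGradientAt') (ξ n) t
  have hlim := (hvξ.pow 2).sub (hWξ.const_mul 2)
  simp only [henergy] at hlim
  linarith [tendsto_nhds_unique tendsto_const_nhds hlim]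

theorem velocity_pos (hw : LocallyLipschitz w) (h : IsNewtonTrajectory w u v) (hab : a < b)
    (hbot : Tendsto u atBot (𝓝 a)) (htop : Tendsto u atTop (𝓝 b)) (t : ℝ) : 0 < v t := by
  obtain hneg | hpos := hasDerivWithinAt_forall_lt_or_forall_gt_of_forall_ne convex_univ
    (fun t _ ↦ (h.hasDerivAt_position t).hasDerivWithinAt)
    fun t _ ↦ h.velocity_ne_zero hw hab.ne hbot htop t
  · have hanti : Antitone u := antitone_of_hasDerivAt_nonpos h.hasDerivAt_position
      fun t ↦ (hneg t trivial).le
    exact absurd ((hanti.le_of_tendsto htop t).trans (hanti.ge_of_tendsto hbot t)) hab.not_ge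
  · exact hpos t trivial

theorem integral_velocity_sq (hW : ∀ x, HasDerivAt W (w x) x) (hw : LocallyLipschitz w)
    (h : IsNewtonTrajectory w u v) (hab : a < b) (hbot : Tendsto u atBot (𝓝 a))
    (htop : Tendsto u atTop (𝓝 b)) :
    ∫ t, v t ^ 2 = ∫ s in a..b, √(2 * (W s - W b)) := by
  have hpos := h.velocity_pos hw hab hbot htop
  have hmono := monotone_of_hasDerivAt_nonneg h.hasDerivAt_position fun t ↦ (hpos t).le
  rw [← integral_hasDerivAt_smul_comp_of_monotone h.hasDerivAt_position hmono hbot htop]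
  refine MeasureTheory.integral_congr_ae (.of_forall fun t ↦ ?_)
  simp only [smul_eq_mul, ← h.velocity_sq_eq hW htop t, sqrt_sq (hpos t).le, ← sq]

end Real

end IsNewtonTrajectory

theorem optimal_profile_first_integral_general {W w u v : ℝ → ℝ} {a b : ℝ} (hab : a < b)
    (hW : ∀ x, HasDerivAt W (w x) x) (hw : LocallyLipschitz w) (h : IsNewtonTrajectory w u v)
    (htop : Tendsto u atTop (𝓝 b)) (hbot : Tendsto u atBot (𝓝 a)) :
    (∀ t, v t ^ 2 = 2 * (W (u t) - W b)) ∧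
      ∫ t, v t ^ 2 = ∫ s in a..b, √(2 * (W s - W b)) :=
  ⟨h.velocity_sq_eq hW htop, h.integral_velocity_sq hW hw hab hbot htop⟩

/-- First-integral identity for the optimal profile: θ₀'² = 2 f(θ₀), and consequently
σ = ∫_ℝ θ₀'² dρ = ∫_{-1}^{1} √(2 f(s)) ds. -/
theorem optimal_profile_first_integral
    (f : ℝ → ℝ)
    (hf : ContDiff ℝ (⊤ : ℕ∞) f)
    (hfeven : ∀ x, f (-x) = f x)
    (hf1 : f 1 = 0) (hfm1 : f (-1) = 0)
    (hf'1 : deriv f 1 = 0) (hf'm1 : deriv f (-1) = 0)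
    (hf''1 : 0 < iteratedDeriv 2 f 1) (hf''m1 : 0 < iteratedDeriv 2 f (-1))
    (hfpos : ∀ x ∈ Set.Ioo (-1:ℝ) 1, 0 < f x)
    (θ₀ : ℝ → ℝ)
    (hθreg : ContDiff ℝ 2 θ₀)
    (hODE : ∀ ρ, deriv (deriv θ₀) ρ = deriv f (θ₀ ρ))
    (hlimtop : Tendsto θ₀ atTop (nhds 1))
    (hlimbot : Tendsto θ₀ atBot (nhds (-1)))
    (hzero : θ₀ 0 = 0) :
    (∀ ρ : ℝ, (deriv θ₀ ρ) ^ 2 = 2 * f (θ₀ ρ)) ∧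
    (∫ ρ : ℝ, (deriv θ₀ ρ) ^ 2) = ∫ s in (-1:ℝ)..1, Real.sqrt (2 * f s) := by
  have hf' : ContDiff ℝ 1 (deriv f) := ContDiff.deriv' (n := 1) (hf.of_le (by norm_cast))
  have hθ' : ContDiff ℝ 1 (deriv θ₀) := ContDiff.deriv' (n := 1) hθreg
  have htraj : IsNewtonTrajectory (deriv f) θ₀ (deriv θ₀) :=
    .of_deriv_deriv (hθreg.differentiable two_ne_zero) (hθ'.differentiable one_ne_zero) hODE
  simpa only [hf1, sub_zero] using optimal_profile_first_integral_general (by norm_num)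
    (fun x ↦ (hf.differentiable (by simp) x).hasDerivAt) hf'.locallyLipschitz htraj hlimtop hlimbot
end

section
/- Let f be a smooth double-well potential (f ∈ C^∞(ℝ), even, f(±1) = 0, f'(±1) = 0, f''(±1) > 0, f > 0 on (−1,1)), θ₀ the optimal profile, σ := ∫_ℝ θ₀'(ρ)² dρ, and θ₁ the unique bounded solution of −θ₁'' + f''(θ₀)θ₁ = 1 − (2/σ)θ₀' with θ₁(0) = 0. Then the orthogonality relation ∫_ℝ θ₀'(ρ)² f'''(θ₀(ρ)) θ₁(ρ) dρ = 0 holds (since ρ ↦ f'''(θ₀(ρ)) is odd while θ₀' and θ₁ are even). -/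
open Real Filter

/-!
The profile `θ₀` is odd, by uniqueness for the initial value problem. If `w` is the odd part of
`θ₁`, then `w` is a bounded solution of the linearised equation `w'' = f''(θ₀) w`, which `θ₀'`
solves too. The Wronskian of the two is constant, and it vanishes because `θ₀'` and `θ₀''` decay
at infinity. At `0` it equals `w'(0) θ₀'(0)`, and `θ₀'(0) ≠ 0` by conservation of energy. So `w`
has zero initial data, `θ₁` is even, and the integrand is odd.
-/

open Topology MeasureTheory

section Parity

theorem hasDerivAt_comp_neg {𝕜 E : Type*} [NontriviallyNormedField 𝕜] [NormedAddCommGroup E]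
    [NormedSpace 𝕜 E] {u : 𝕜 → E} {u' : E} {t : 𝕜} (h : HasDerivAt u u' (-t)) :
    HasDerivAt (fun s ↦ u (-s)) (-u') t :=
  (h.scomp t (hasDerivAt_neg t)).congr_deriv (neg_one_smul 𝕜 u')

theorem even_deriv_of_odd {𝕜 E : Type*} [NontriviallyNormedField 𝕜] [NormedAddCommGroup E]
    [NormedSpace 𝕜 E] {u : 𝕜 → E} (hu : Function.Odd u) : Function.Even (deriv u) := fun t ↦ by
  have h := deriv_comp_neg u t
  simpa [funext hu, deriv.fun_neg] using h.symm

theorem iteratedDeriv_neg_of_even {𝕜 E : Type*} [NontriviallyNormedField 𝕜]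
    [NormedAddCommGroup E] [NormedSpace 𝕜 E] {f : 𝕜 → E} (hf : Function.Even f) (n : ℕ) (x : 𝕜) :
    iteratedDeriv n f (-x) = (-1 : 𝕜) ^ n • iteratedDeriv n f x := by
  simpa [funext hf] using iteratedDeriv_comp_neg n f (-x)

theorem integral_eq_zero_of_odd {G E : Type*} [MeasurableSpace G] [AddGroup G] [MeasurableNeg G]
    [NormedAddCommGroup E] [NormedSpace ℝ E] {μ : Measure G} [μ.IsNegInvariant] {g : G → E}
    (hg : Function.Odd g) : ∫ x, g x ∂μ = 0 := by
  have h := integral_neg_eq_self g μ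
  simp only [hg.eq, integral_neg] at h
  have := IsAddTorsionFree.of_isTorsionFree ℝ E
  exact self_eq_neg.1 h.symm

end Parity

section Uniqueness

variable {E : Type*} [NormedAddCommGroup E] [NormedSpace ℝ E]

theorem eq_zero_of_norm_deriv_le_mul_norm {p p' : ℝ → E} {t₀ : ℝ}
    (hp : ∀ t, HasDerivAt p (p' t) t)
    (bound : ∀ a b : ℝ, ∃ K : ℝ, ∀ t ∈ Set.Icc a b, ‖p' t‖ ≤ K * ‖p t‖)
    (hp₀ : p t₀ = 0) (t : ℝ) : p t = 0 := by
  rcases le_total t₀ t with ht | ht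
  · obtain ⟨K, hK⟩ := bound t₀ t
    exact eq_zero_of_abs_deriv_le_mul_abs_self_of_eq_zero_right
      (fun s _ ↦ (hp s).continuousAt.continuousWithinAt) (fun s _ ↦ (hp s).hasDerivWithinAt) hp₀
      (fun s hs ↦ hK s (Set.Ico_subset_Icc_self hs)) t (Set.right_mem_Icc.2 ht)
  · obtain ⟨K, hK⟩ := bound t t₀
    have hq (s : ℝ) : HasDerivAt (fun r ↦ p (-r)) (-p' (-s)) s := hasDerivAt_comp_neg (hp (-s))
    have hq_zero := eq_zero_of_abs_deriv_le_mul_abs_self_of_eq_zero_right (a := -t₀) (b := -t)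
      (fun s _ ↦ (hq s).continuousAt.continuousWithinAt) (fun s _ ↦ (hq s).hasDerivWithinAt)
      (by simpa using hp₀)
      (fun s hs ↦ by simpa using hK (-s) ⟨le_neg.1 hs.2.le, neg_le.1 hs.1⟩)
    simpa using hq_zero (-t) (Set.right_mem_Icc.2 (neg_le_neg ht))

theorem eq_zero_of_norm_deriv_deriv_le_mul_norm {g g' g'' : ℝ → E} {t₀ : ℝ}
    (hg : ∀ t, HasDerivAt g (g' t) t) (hg' : ∀ t, HasDerivAt g' (g'' t) t)
    (bound : ∀ a b : ℝ, ∃ K : ℝ, ∀ t ∈ Set.Icc a b, ‖g'' t‖ ≤ K * ‖g t‖)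
    (hg₀ : g t₀ = 0) (hg'₀ : g' t₀ = 0) (t : ℝ) : g t = 0 := by
  have h := eq_zero_of_norm_deriv_le_mul_norm (t₀ := t₀) (fun s ↦ (hg s).prodMk (hg' s)) ?_
    (Prod.ext hg₀ hg'₀) t
  · exact congrArg Prod.fst h
  intro a b
  obtain ⟨K, hK⟩ := bound a b
  refine ⟨max 1 K, fun s hs ↦ max_le ?_ ?_⟩
  · calc ‖g' s‖ ≤ 1 * ‖(g s, g' s)‖ := by simpa only [one_mul] using norm_snd_le (g s, g' s)
      _ ≤ max 1 K * ‖(g s, g' s)‖ := by gcongr; exact le_max_left 1 K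
  · calc ‖g'' s‖ ≤ K * ‖g s‖ := hK s hs
      _ ≤ max 1 K * ‖(g s, g' s)‖ := by
        gcongr
        · exact le_max_right 1 K
        · exact norm_fst_le (g s, g' s)

theorem odd_of_hasDerivAt_of_odd {G : E → E} (hG : LocallyLipschitz G) (hG_odd : Function.Odd G)
    {u v : ℝ → E} (hu : ∀ t, HasDerivAt u (v t) t) (hv : ∀ t, HasDerivAt v (G (u t)) t)
    (hu₀ : u 0 = 0) : Function.Odd u := by
  have hu_cont : Continuous u := continuous_iff_continuousAt.2 fun t ↦ (hu t).continuousAt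
  have hs (t : ℝ) : HasDerivAt (fun s ↦ u (-s) + u s) (-v (-t) + v t) t :=
    (hasDerivAt_comp_neg (hu (-t))).add (hu t)
  have hs' (t : ℝ) : HasDerivAt (fun s ↦ -v (-s) + v s) (G (u (-t)) + G (u t)) t :=
    ((hasDerivAt_comp_neg (hv (-t))).neg.add (hv t)).congr_deriv (by rw [neg_neg])
  refine fun t ↦ eq_neg_of_add_eq_zero_left <|
    eq_zero_of_norm_deriv_deriv_le_mul_norm hs hs' (fun a b ↦ ?_) (t₀ := 0) (by simp [hu₀])
      (by simp) t
  have hcompact : IsCompact (u '' Set.Icc a b ∪ (fun s ↦ -u (-s)) '' Set.Icc a b) :=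
    (isCompact_Icc.image hu_cont).union (isCompact_Icc.image (by fun_prop))
  obtain ⟨K, hK⟩ := hG.locallyLipschitzOn.exists_lipschitzOnWith_of_compact hcompact
  refine ⟨K, fun s hs ↦ ?_⟩
  simpa [hG_odd.eq, add_comm] using
    hK.norm_sub_le (.inl ⟨s, hs, rfl⟩) (.inr ⟨s, hs, rfl⟩)

end Uniqueness

section Decay

theorem eq_zero_of_tendsto_of_tendsto_deriv {g g' : ℝ → ℝ} {l m : ℝ}
    (hg : ∀ t, HasDerivAt g (g' t) t) (hl : Tendsto g atTop (𝓝 l))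
    (hm : Tendsto g' atTop (𝓝 m)) : m = 0 := by
  have mean_value (t : ℝ) : ∃ c > t, g' c = g (t + 1) - g t := by
    obtain ⟨c, hc, h⟩ := exists_hasDerivAt_eq_slope g g' (lt_add_one t)
      (fun s _ ↦ (hg s).continuousAt.continuousWithinAt) (fun s _ ↦ hg s)
    exact ⟨c, hc.1, by simpa using h⟩
  choose c hc hslope using mean_value
  have hc_top : Tendsto c atTop atTop := tendsto_atTop_mono (fun t ↦ (hc t).le) tendsto_id
  have hdiff : Tendsto (fun t ↦ g (t + 1) - g t) atTop (𝓝 (l - l)) :=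
    (hl.comp (tendsto_atTop_add_const_right _ 1 tendsto_id)).sub hl
  rw [← sub_self l]
  exact tendsto_nhds_unique (hm.comp hc_top) (hdiff.congr fun t ↦ (hslope t).symm)

theorem eq_of_forall_hasDerivAt_zero {E : Type*} [NormedAddCommGroup E] [NormedSpace ℝ E]
    {g : ℝ → E} (hg : ∀ t, HasDerivAt g 0 t) (s t : ℝ) : g s = g t :=
  is_const_of_deriv_eq_zero (fun r ↦ (hg r).differentiableAt) (fun r ↦ (hg r).deriv) s t

variable {F F' u v : ℝ → ℝ} {a : ℝ}

theorem sq_deriv_eq_two_mul_sub (hF : ∀ x, HasDerivAt F (F' x) x) (hF' : ContinuousAt F' a)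
    (hu : ∀ t, HasDerivAt u (v t) t) (hv : ∀ t, HasDerivAt v (F' (u t)) t)
    (hlim : Tendsto u atTop (𝓝 a)) (t : ℝ) : v t ^ 2 = 2 * (F (u t) - F a) := by
  set c := v t ^ 2 - 2 * F (u t)
  have energy (s : ℝ) : v s ^ 2 = c + 2 * F (u s) := by
    rw [← sub_eq_iff_eq_add]
    refine eq_of_forall_hasDerivAt_zero (g := fun r ↦ v r ^ 2 - 2 * F (u r)) (fun r ↦ ?_) s t
    refine (((hv r).pow 2).sub (((hF (u r)).comp r (hu r)).const_mul 2)).congr_deriv ?_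
    simp only [Nat.cast_ofNat]
    ring
  have hv_sq : Tendsto (fun s ↦ v s ^ 2) atTop (𝓝 (c + 2 * F a)) := by
    simp only [energy]
    exact (((hF a).continuousAt.tendsto.comp hlim).const_mul 2).const_add c
  have hu_sub : Tendsto (fun s ↦ u s - a) atTop (𝓝 0) := by simpa using hlim.sub_const a
  have hv_bdd : IsBoundedUnder (· ≤ ·) atTop (norm ∘ v) := by
    simpa [Function.comp_def, Real.sqrt_sq_eq_abs] using hv_sq.sqrt.isBoundedUnder_le
  -- `(u - a) v` tends to `0`, and the limit of its derivative is that of `v ^ 2`.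
  have hprod (s : ℝ) : HasDerivAt (fun r ↦ (u r - a) * v r) (v s ^ 2 + (u s - a) * F' (u s)) s :=
    (((hu s).sub_const a).mul (hv s)).congr_deriv (by ring)
  have hlimit_zero := eq_zero_of_tendsto_of_tendsto_deriv hprod
    (hu_sub.zero_mul_isBoundedUnder_le hv_bdd) (hv_sq.add (hu_sub.mul (hF'.tendsto.comp hlim)))
  linarith [energy t]

theorem tendsto_deriv_zero_of_tendsto (hF : ∀ x, HasDerivAt F (F' x) x) (hF' : ContinuousAt F' a)
    (hu : ∀ t, HasDerivAt u (v t) t) (hv : ∀ t, HasDerivAt v (F' (u t)) t)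
    (hlim : Tendsto u atTop (𝓝 a)) : Tendsto v atTop (𝓝 0) := by
  have hF_lim : Tendsto (fun t ↦ 2 * (F (u t) - F a)) atTop (𝓝 0) := by
    simpa using (((hF a).continuousAt.tendsto.comp hlim).sub_const (F a)).const_mul 2
  simp only [← sq_deriv_eq_two_mul_sub hF hF' hu hv hlim] at hF_lim
  rw [tendsto_zero_iff_abs_tendsto_zero]
  simpa [Function.comp_def, Real.sqrt_sq_eq_abs] using hF_lim.sqrt

theorem tendsto_deriv_deriv_zero_of_tendsto (hF : ∀ x, HasDerivAt F (F' x) x)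
    (hF' : ContinuousAt F' a) (hu : ∀ t, HasDerivAt u (v t) t)
    (hv : ∀ t, HasDerivAt v (F' (u t)) t) (hlim : Tendsto u atTop (𝓝 a)) :
    Tendsto (fun t ↦ F' (u t)) atTop (𝓝 0) := by
  have hv_lim := tendsto_deriv_zero_of_tendsto hF hF' hu hv hlim
  have hF'_lim : Tendsto (fun t ↦ F' (u t)) atTop (𝓝 (F' a)) := hF'.tendsto.comp hlim
  rwa [eq_zero_of_tendsto_of_tendsto_deriv hv hv_lim hF'_lim] at hF'_lim

end Decay

section LinearEquation

variable {q φ φ' w w' : ℝ → ℝ}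

theorem wronskian_eq_zero_of_isBoundedUnder
    (hφ : ∀ t, HasDerivAt φ (φ' t) t) (hφ' : ∀ t, HasDerivAt φ' (q t * φ t) t)
    (hφ_lim : Tendsto φ atTop (𝓝 0)) (hφ'_lim : Tendsto φ' atTop (𝓝 0))
    (hw : ∀ t, HasDerivAt w (w' t) t) (hw' : ∀ t, HasDerivAt w' (q t * w t) t)
    (hw_bdd : IsBoundedUnder (· ≤ ·) atTop (norm ∘ w)) (t : ℝ) : w' t * φ t - w t * φ' t = 0 := by
  set W := w' t * φ t - w t * φ' t
  have wronskian_const (s : ℝ) : w' s * φ s - w s * φ' s = W :=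
    eq_of_forall_hasDerivAt_zero (g := fun r ↦ w' r * φ r - w r * φ' r)
      (fun r ↦ (((hw' r).mul (hφ r)).sub ((hw r).mul (hφ' r))).congr_deriv (by ring)) s t
  -- `w φ` tends to `0`, and its derivative `W + 2 w φ'` tends to `W`.
  have hprod (s : ℝ) : HasDerivAt (fun r ↦ w r * φ r) (W + 2 * (w s * φ' s)) s :=
    ((hw s).mul (hφ s)).congr_deriv (by rw [← wronskian_const s]; ring)
  refine eq_zero_of_tendsto_of_tendsto_deriv hprod
    (isBoundedUnder_le_mul_tendsto_zero hw_bdd hφ_lim) ?_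
  simpa using ((isBoundedUnder_le_mul_tendsto_zero hw_bdd hφ'_lim).const_mul 2).const_add W

theorem eq_zero_of_isBoundedUnder_of_eq_zero {t₀ : ℝ} (hq : Continuous q)
    (hφ : ∀ t, HasDerivAt φ (φ' t) t) (hφ' : ∀ t, HasDerivAt φ' (q t * φ t) t)
    (hφ_lim : Tendsto φ atTop (𝓝 0)) (hφ'_lim : Tendsto φ' atTop (𝓝 0)) (hφ₀ : φ t₀ ≠ 0)
    (hw : ∀ t, HasDerivAt w (w' t) t) (hw' : ∀ t, HasDerivAt w' (q t * w t) t)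
    (hw_bdd : IsBoundedUnder (· ≤ ·) atTop (norm ∘ w)) (hw₀ : w t₀ = 0) (t : ℝ) : w t = 0 := by
  have hw'₀ : w' t₀ = 0 := by
    simpa [hw₀, hφ₀] using
      wronskian_eq_zero_of_isBoundedUnder hφ hφ' hφ_lim hφ'_lim hw hw' hw_bdd t₀
  refine eq_zero_of_norm_deriv_deriv_le_mul_norm hw hw' (fun a b ↦ ?_) hw₀ hw'₀ t
  obtain ⟨K, hK⟩ := (isCompact_Icc (a := a) (b := b)).exists_bound_of_continuousOn hq.continuousOn
  refine ⟨K, fun s hs ↦ ?_⟩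
  rw [norm_mul]
  gcongr
  exact hK s hs

theorem even_of_bounded_of_even {h : ℝ → ℝ} (hq : Continuous q) (hq_even : Function.Even q)
    (hh_even : Function.Even h)
    (hφ : ∀ t, HasDerivAt φ (φ' t) t) (hφ' : ∀ t, HasDerivAt φ' (q t * φ t) t)
    (hφ_lim : Tendsto φ atTop (𝓝 0)) (hφ'_lim : Tendsto φ' atTop (𝓝 0)) (hφ₀ : φ 0 ≠ 0)
    (hw : ∀ t, HasDerivAt w (w' t) t) (hw' : ∀ t, HasDerivAt w' (q t * w t - h t) t)
    (hw_bdd : ∃ C : ℝ, ∀ t, |w t| ≤ C) : Function.Even w := by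
  obtain ⟨C, hC⟩ := hw_bdd
  have hd (t : ℝ) : HasDerivAt (fun s ↦ w (-s) - w s) (-w' (-t) - w' t) t :=
    (hasDerivAt_comp_neg (hw (-t))).sub (hw t)
  have hd' (t : ℝ) : HasDerivAt (fun s ↦ -w' (-s) - w' s) (q t * (w (-t) - w t)) t :=
    ((hasDerivAt_comp_neg (hw' (-t))).neg.sub (hw' t)).congr_deriv (by
      rw [hq_even, hh_even]; ring)
  have hd_bdd : IsBoundedUnder (· ≤ ·) atTop (norm ∘ fun t ↦ w (-t) - w t) :=
    isBoundedUnder_of ⟨C + C, fun t ↦ (norm_sub_le _ _).trans (add_le_add (hC (-t)) (hC t))⟩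
  exact fun t ↦ sub_eq_zero.1 <| eq_zero_of_isBoundedUnder_of_eq_zero hq hφ hφ' hφ_lim hφ'_lim hφ₀
    hd hd' hd_bdd (by simp) t

end LinearEquation

theorem theta_one_orthogonality_general {f : ℝ → ℝ} (hf : ContDiff ℝ 3 f)
    (hf_even : Function.Even f) {a : ℝ} (hfa : f 0 ≠ f a)
    {θ₀ : ℝ → ℝ} (hθ₀ : ContDiff ℝ 2 θ₀) (hODE : ∀ ρ, deriv (deriv θ₀) ρ = deriv f (θ₀ ρ))
    (hlim : Tendsto θ₀ atTop (𝓝 a)) (hzero : θ₀ 0 = 0)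
    {θ₁ : ℝ → ℝ} (hθ₁ : ContDiff ℝ 2 θ₁) (hθ₁_bdd : ∃ C : ℝ, ∀ ρ, |θ₁ ρ| ≤ C) {g : ℝ → ℝ}
    (hθ₁_eq : ∀ ρ, -deriv (deriv θ₁) ρ + iteratedDeriv 2 f (θ₀ ρ) * θ₁ ρ = g (deriv θ₀ ρ)) :
    ∫ ρ : ℝ, deriv θ₀ ρ ^ 2 * iteratedDeriv 3 f (θ₀ ρ) * θ₁ ρ = 0 := by
  have hf_two : ContDiff ℝ 2 f := hf.of_le (by norm_num)
  have hf' (x : ℝ) : HasDerivAt f (deriv f x) x :=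
    (hf_two.differentiable two_ne_zero x).hasDerivAt
  have hf'' (x : ℝ) : HasDerivAt (deriv f) (iteratedDeriv 2 f x) x := by
    rw [iteratedDeriv_succ, iteratedDeriv_one]
    exact (hf_two.differentiable_deriv_two x).hasDerivAt
  have hu (ρ : ℝ) : HasDerivAt θ₀ (deriv θ₀ ρ) ρ := (hθ₀.differentiable two_ne_zero ρ).hasDerivAt
  have hv (ρ : ℝ) : HasDerivAt (deriv θ₀) (deriv f (θ₀ ρ)) ρ :=
    hODE ρ ▸ (hθ₀.differentiable_deriv_two ρ).hasDerivAt
  have hθ₀_odd : Function.Odd θ₀ := by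
    refine odd_of_hasDerivAt_of_odd (ContDiff.locallyLipschitz (𝕂 := ℝ) ?_) (fun x ↦ ?_) hu hv hzero
    · exact (contDiff_succ_iff_deriv (n := 1).1 hf_two).2.2
    · simpa using iteratedDeriv_neg_of_even hf_even 1 x
  have hθ₀'_even := even_deriv_of_odd hθ₀_odd
  have hθ₀'_zero : deriv θ₀ 0 ≠ 0 := fun h ↦ hfa <| by
    have energy := sq_deriv_eq_two_mul_sub hf' (hf'' a).continuousAt hu hv hlim 0
    rw [h, hzero] at energy
    linarith
  have hθ₁_even : Function.Even θ₁ := by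
    refine even_of_bounded_of_even (q := fun ρ ↦ iteratedDeriv 2 f (θ₀ ρ))
      (h := fun ρ ↦ g (deriv θ₀ ρ))
      ((hf_two.continuous_iteratedDeriv 2 le_rfl).comp hθ₀.continuous) (fun ρ ↦ ?_)
      (hθ₀'_even.left_comp g) hv (fun ρ ↦ (hf'' (θ₀ ρ)).comp ρ (hu ρ))
      (tendsto_deriv_zero_of_tendsto hf' (hf'' a).continuousAt hu hv hlim)
      (tendsto_deriv_deriv_zero_of_tendsto hf' (hf'' a).continuousAt hu hv hlim) hθ₀'_zero
      (fun ρ ↦ (hθ₁.differentiable two_ne_zero ρ).hasDerivAt) (fun ρ ↦ ?_) hθ₁_bdd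
    · simp [hθ₀_odd.eq, iteratedDeriv_neg_of_even hf_even]
    · exact (hθ₁.differentiable_deriv_two ρ).hasDerivAt.congr_deriv (by linarith [hθ₁_eq ρ])
  refine integral_eq_zero_of_odd fun ρ ↦ ?_
  rw [hθ₀'_even, hθ₀_odd, hθ₁_even, iteratedDeriv_neg_of_even hf_even, smul_eq_mul]
  ring

/-- Orthogonality relation ∫_ℝ θ₀'² f'''(θ₀) θ₁ dρ = 0 for the optimal profile θ₀ and
the bounded solution θ₁ of -θ₁'' + f''(θ₀)θ₁ = 1 - (2/σ)θ₀' with θ₁(0) = 0. -/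
theorem theta_one_orthogonality
    (f : ℝ → ℝ)
    (hf : ContDiff ℝ (⊤ : ℕ∞) f)
    (hfeven : ∀ x, f (-x) = f x)
    (hf1 : f 1 = 0) (hfm1 : f (-1) = 0)
    (hf'1 : deriv f 1 = 0) (hf'm1 : deriv f (-1) = 0)
    (hf''1 : 0 < iteratedDeriv 2 f 1) (hf''m1 : 0 < iteratedDeriv 2 f (-1))
    (hfpos : ∀ x ∈ Set.Ioo (-1:ℝ) 1, 0 < f x)
    (θ₀ : ℝ → ℝ)
    (hθreg : ContDiff ℝ 2 θ₀)
    (hODE : ∀ ρ, deriv (deriv θ₀) ρ = deriv f (θ₀ ρ))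
    (hlimtop : Tendsto θ₀ atTop (nhds 1))
    (hlimbot : Tendsto θ₀ atBot (nhds (-1)))
    (hzero : θ₀ 0 = 0)
    (σ : ℝ) (hσ : σ = ∫ ρ : ℝ, (deriv θ₀ ρ) ^ 2)
    (θ₁ : ℝ → ℝ)
    (hθ₁reg : ContDiff ℝ 2 θ₁)
    (hθ₁bdd : ∃ C : ℝ, ∀ ρ, |θ₁ ρ| ≤ C)
    (hθ₁eq : ∀ ρ, -deriv (deriv θ₁) ρ + iteratedDeriv 2 f (θ₀ ρ) * θ₁ ρ
        = 1 - (2 / σ) * deriv θ₀ ρ)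
    (hθ₁zero : θ₁ 0 = 0) :
    (∫ ρ : ℝ, (deriv θ₀ ρ) ^ 2 * iteratedDeriv 3 f (θ₀ ρ) * θ₁ ρ) = 0 :=
  theta_one_orthogonality_general (hf.of_le (WithTop.coe_le_coe.2 le_top)) hfeven
    (hf1 ▸ (hfpos 0 (by norm_num)).ne') hθreg hODE hlimtop hzero hθ₁reg hθ₁bdd
    (g := fun x ↦ 1 - 2 / σ * x) hθ₁eq
end

section
/- (Localized diffuse-interface integral estimate, in coordinates.) Let f ∈ S(ℝ) be a Schwartz function, δ > 0, M > 0, and let ζ ∈ C^∞(ℝ) satisfy ζ(z) = 1 for |z| ≤ δ and ζ(z) = 0 for |z| ≥ 2δ. Then there is C > 0 such that for every measurable h : 𝕋¹ → ℝ with sup_{s} |h(s)| ≤ M, every measurable J₁ : (−2δ,2δ) × 𝕋¹ → ℝ with |J₁| ≤ M, every a ∈ L¹(𝕋¹), and every ε ∈ (0,1]: | ∫_{−2δ}^{2δ} ∫_{𝕋¹} ζ(r) f'( r/ε − h(s) ) a(s) ( 1 + r J₁(r,s) ) ds dr | ≤ C ε² ‖a‖_{L¹(𝕋¹)}. -/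
open MeasureTheory Set

/-! For fixed `s`, integrating `ζ(r) f'(r/ε - h(s))` by parts in `r` gains a factor `ε`, and
substituting `x = r/ε - h(s)` in the remaining integral of `f` gains another. In the Jacobian
correction the substitution gains one factor, and `r = ε (x + h(s))` supplies the second at the
price of a first moment of `f'`. Both bounds are uniform in `s`, so Fubini's theorem passes them to
the integral against `a`. -/

section Rescaling

variable {g c : ℝ → ℝ} {A : Set ℝ} {C M ε η : ℝ}

lemma integrable_comp_div_sub {E : Type*} [NormedAddCommGroup E] [NormedSpace ℝ E] {g : ℝ → E}
    (hg : Integrable g) (hε : ε ≠ 0) (η : ℝ) : Integrable fun r ↦ g (r / ε - η) :=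
  (hg.comp_sub_right η).comp_div hε

lemma integral_comp_div_sub {E : Type*} [NormedAddCommGroup E] [NormedSpace ℝ E]
    (g : ℝ → E) (ε η : ℝ) : ∫ r, g (r / ε - η) = |ε| • ∫ x, g x := by
  rw [Measure.integral_comp_div (fun x ↦ g (x - η)), integral_sub_right_eq_self]

lemma integrable_abs_add_mul_abs (hg : Integrable g) (hxg : Integrable fun x ↦ x * g x) (M : ℝ) :
    Integrable fun x ↦ (|x| + M) * |g x| := by
  simpa only [add_mul, abs_mul] using! hxg.abs.add (hg.abs.const_mul M)

lemma integrable_id_mul_comp_div_sub (hg : Integrable g) (hxg : Integrable fun x ↦ x * g x)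
    (hε : ε ≠ 0) (η : ℝ) : Integrable fun r ↦ r * g (r / ε - η) := by
  have hshift : Integrable fun x ↦ ε * (x * g x + η * g x) :=
    (hxg.add (hg.const_mul η)).const_mul ε
  refine (integrable_comp_div_sub hshift hε η).congr (.of_forall fun r ↦ ?_)
  field_simp
  ring

lemma integral_abs_mul_abs_comp_div_sub_le (hg : Integrable g)
    (hxg : Integrable fun x ↦ x * g x) (hε : 0 < ε) (hη : |η| ≤ M) :
    ∫ r, |r| * |g (r / ε - η)| ≤ ε ^ 2 * ∫ x, (|x| + M) * |g x| := by
  have hr (r : ℝ) : |r| = ε * |(r / ε - η) + η| := by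
    rw [sub_add_cancel, abs_div, abs_of_pos hε, mul_div_cancel₀ _ hε.ne']
  calc ∫ r, |r| * |g (r / ε - η)|
      = ∫ r, ε * |(r / ε - η) + η| * |g (r / ε - η)| := by simp only [← hr]
    _ = ε ^ 2 * ∫ x, |x + η| * |g x| := by
        rw [integral_comp_div_sub (fun x ↦ ε * |x + η| * |g x|), abs_of_pos hε, smul_eq_mul]
        simp only [mul_assoc, integral_const_mul, sq]
    _ ≤ ε ^ 2 * ∫ x, (|x| + M) * |g x| := by
        refine mul_le_mul_of_nonneg_left (integral_mono_of_nonneg (.of_forall fun x ↦ by positivity)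
          (integrable_abs_add_mul_abs hg hxg M) (.of_forall fun x ↦ ?_)) (sq_nonneg ε)
        have hshift : |x + η| ≤ |x| + M := (abs_add_le x η).trans (by gcongr)
        exact mul_le_mul_of_nonneg_right hshift (abs_nonneg (g x))

lemma setIntegral_abs_le_integral {X : Type*} [MeasurableSpace X] {μ : Measure X} {A : Set X}
    {F G : X → ℝ} (hA : MeasurableSet A) (hG : Integrable G μ) (hG_nonneg : 0 ≤ G)
    (hFG : ∀ x ∈ A, |F x| ≤ G x) : ∫ x in A, |F x| ∂μ ≤ ∫ x, G x ∂μ :=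
  calc ∫ x in A, |F x| ∂μ
      ≤ ∫ x in A, G x ∂μ := integral_mono_of_nonneg (.of_forall fun _ ↦ abs_nonneg _)
        hG.integrableOn (ae_restrict_of_forall_mem hA hFG)
    _ ≤ ∫ x, G x ∂μ := setIntegral_le_integral hG (.of_forall hG_nonneg)

lemma setIntegral_abs_mul_comp_div_sub_le (hA : MeasurableSet A) (hg : Integrable g)
    (hC : 0 ≤ C) (hc : ∀ r ∈ A, |c r| ≤ C) (hε : 0 < ε) (η : ℝ) :
    ∫ r in A, |c r * g (r / ε - η)| ≤ C * ε * ∫ x, |g x| :=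
  calc ∫ r in A, |c r * g (r / ε - η)|
      ≤ ∫ r, C * |g (r / ε - η)| := by
        refine setIntegral_abs_le_integral hA
          ((integrable_comp_div_sub hg hε.ne' η).abs.const_mul C) (fun r ↦ by positivity)
          fun r hr ↦ ?_
        rw [abs_mul]
        gcongr
        exact hc r hr
    _ = C * ε * ∫ x, |g x| := by
        rw [integral_const_mul, integral_comp_div_sub (fun x ↦ |g x|), abs_of_pos hε, smul_eq_mul,
          mul_assoc]

lemma setIntegral_abs_mul_comp_div_sub_le_of_abs_le_mul_abs (hA : MeasurableSet A)
    (hg : Integrable g) (hxg : Integrable fun x ↦ x * g x) (hC : 0 ≤ C)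
    (hc : ∀ r ∈ A, |c r| ≤ C * |r|) (hε : 0 < ε) (hη : |η| ≤ M) :
    ∫ r in A, |c r * g (r / ε - η)| ≤ C * ε ^ 2 * ∫ x, (|x| + M) * |g x| :=
  calc ∫ r in A, |c r * g (r / ε - η)|
      ≤ ∫ r, C * (|r| * |g (r / ε - η)|) := by
        refine setIntegral_abs_le_integral hA ?_ (fun r ↦ by positivity) fun r hr ↦ ?_
        · simpa only [abs_mul] using
            (integrable_id_mul_comp_div_sub hg hxg hε.ne' η).abs.const_mul C
        · rw [abs_mul, ← mul_assoc]
          gcongr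
          exact hc r hr
    _ ≤ C * ε ^ 2 * ∫ x, (|x| + M) * |g x| := by
        rw [integral_const_mul, mul_assoc]
        gcongr
        exact integral_abs_mul_abs_comp_div_sub_le hg hxg hε hη

lemma integrableOn_mul_comp_div_sub (hA : MeasurableSet A) (hg : Integrable g)
    (hc_meas : Measurable c) (hc : ∀ r ∈ A, |c r| ≤ C) (hε : ε ≠ 0) (η : ℝ) :
    IntegrableOn (fun r ↦ c r * g (r / ε - η)) A :=
  (integrable_comp_div_sub hg hε η).integrableOn.bdd_mul hc_meas.aestronglyMeasurable
    (ae_restrict_of_forall_mem hA hc)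

end Rescaling

section Slice

variable {f ζ J : ℝ → ℝ} {α β B K L M ε η : ℝ}

lemma integral_mul_deriv_comp_div_sub (hf : Differentiable ℝ f) (hf' : Integrable (deriv f))
    (hζ : ContDiff ℝ 1 ζ) (hαβ : α ≤ β) (hα : ζ α = 0) (hβ : ζ β = 0) (hε : ε ≠ 0) (η : ℝ) :
    ∫ r in Ioo α β, ζ r * deriv f (r / ε - η) =
      -(ε * ∫ r in Ioo α β, deriv ζ r * f (r / ε - η)) := by
  have hv (r : ℝ) : HasDerivAt (fun r ↦ ε * f (r / ε - η)) (deriv f (r / ε - η)) r := by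
    have hinner : HasDerivAt (fun r ↦ r / ε - η) (1 / ε) r :=
      ((hasDerivAt_id r).div_const ε).sub_const η
    have hcomp := ((hf (r / ε - η)).hasDerivAt.comp r hinner).const_mul ε
    rwa [mul_left_comm, mul_one_div_cancel hε, mul_one] at hcomp
  simp only [← integral_Ioc_eq_integral_Ioo, ← intervalIntegral.integral_of_le hαβ]
  rw [intervalIntegral.integral_mul_deriv_eq_deriv_mul
    (fun r _ ↦ (hζ.differentiable one_ne_zero r).hasDerivAt) (fun r _ ↦ hv r)
    ((hζ.continuous_deriv le_rfl).intervalIntegrable _ _)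
    (integrable_comp_div_sub hf' hε η).intervalIntegrable, hα, hβ,
    ← intervalIntegral.integral_const_mul]
  simp only [mul_left_comm, zero_mul, mul_zero, sub_zero, zero_sub]

lemma abs_integral_mul_deriv_comp_div_sub_le (hf : Differentiable ℝ f) (hf_int : Integrable f)
    (hf' : Integrable (deriv f)) (hζ : ContDiff ℝ 1 ζ) (hαβ : α ≤ β) (hα : ζ α = 0)
    (hβ : ζ β = 0) (hK : 0 ≤ K) (hζK : ∀ r ∈ Ioo α β, |deriv ζ r| ≤ K) (hε : 0 < ε) (η : ℝ) :
    |∫ r in Ioo α β, ζ r * deriv f (r / ε - η)| ≤ K * ε ^ 2 * ∫ x, |f x| := by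
  rw [integral_mul_deriv_comp_div_sub hf hf' hζ hαβ hα hβ hε.ne' η, abs_neg, abs_mul,
    abs_of_pos hε]
  calc ε * |∫ r in Ioo α β, deriv ζ r * f (r / ε - η)|
      ≤ ε * (K * ε * ∫ x, |f x|) := by
        gcongr
        exact abs_integral_le_integral_abs.trans
          (setIntegral_abs_mul_comp_div_sub_le measurableSet_Ioo hf_int hK hζK hε η)
    _ = K * ε ^ 2 * ∫ x, |f x| := by ring

lemma abs_mul_one_add_mul_le (hζB : ∀ r ∈ Ioo α β, |ζ r| ≤ B)
    (hJL : ∀ r ∈ Ioo α β, |J r| ≤ L) {r : ℝ} (hr : r ∈ Ioo α β) :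
    |ζ r * (1 + r * J r)| ≤ B * (1 + max |α| |β| * L) := by
  have hr_abs : |r| ≤ max |α| |β| := abs_le_max_abs_abs hr.1.le hr.2.le
  have hweight : |1 + r * J r| ≤ 1 + max |α| |β| * L := by
    refine (abs_add_le _ _).trans ?_
    rw [abs_one, abs_mul]
    gcongr
    exact hJL r hr
  rw [abs_mul]
  exact mul_le_mul (hζB r hr) hweight (abs_nonneg _) ((abs_nonneg _).trans (hζB r hr))

lemma abs_integral_mul_one_add_mul_deriv_comp_div_sub_le (hf : Differentiable ℝ f)
    (hf_int : Integrable f) (hf' : Integrable (deriv f)) (hxf' : Integrable fun x ↦ x * deriv f x)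
    (hζ : ContDiff ℝ 1 ζ) (hαβ : α ≤ β) (hα : ζ α = 0) (hβ : ζ β = 0) (hB : 0 ≤ B)
    (hK : 0 ≤ K) (hL : 0 ≤ L) (hζB : ∀ r ∈ Ioo α β, |ζ r| ≤ B)
    (hζK : ∀ r ∈ Ioo α β, |deriv ζ r| ≤ K) (hJ : Measurable J)
    (hJL : ∀ r ∈ Ioo α β, |J r| ≤ L) (hε : 0 < ε) (hη : |η| ≤ M) :
    |∫ r in Ioo α β, ζ r * (1 + r * J r) * deriv f (r / ε - η)| ≤
      (K * (∫ x, |f x|) + B * L * ∫ x, (|x| + M) * |deriv f x|) * ε ^ 2 := by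
  have hζ_meas : Measurable ζ := hζ.continuous.measurable
  have hmain_int : IntegrableOn (fun r ↦ ζ r * deriv f (r / ε - η)) (Ioo α β) :=
    integrableOn_mul_comp_div_sub measurableSet_Ioo hf' hζ_meas hζB hε.ne' η
  have hweight_int :
      IntegrableOn (fun r ↦ ζ r * (1 + r * J r) * deriv f (r / ε - η)) (Ioo α β) :=
    integrableOn_mul_comp_div_sub measurableSet_Ioo hf' (by fun_prop)
      (fun _ ↦ abs_mul_one_add_mul_le hζB hJL) hε.ne' η
  have hcorrection (r : ℝ) (hr : r ∈ Ioo α β) : |ζ r * (r * J r)| ≤ B * L * |r| := by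
    rw [abs_mul, abs_mul, mul_assoc, mul_comm L]
    gcongr
    exacts [hζB r hr, hJL r hr]
  have hsplit : ∫ r in Ioo α β, ζ r * (1 + r * J r) * deriv f (r / ε - η) =
      (∫ r in Ioo α β, ζ r * deriv f (r / ε - η)) +
        ∫ r in Ioo α β, ζ r * (r * J r) * deriv f (r / ε - η) := by
    rw [← sub_eq_iff_eq_add', ← integral_sub hweight_int hmain_int]
    congr! 2 with r
    ring
  have hmain_le := abs_integral_mul_deriv_comp_div_sub_le hf hf_int hf' hζ hαβ hα hβ hK hζK hε η
  have hcorrection_le := abs_integral_le_integral_abs.trans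
    (setIntegral_abs_mul_comp_div_sub_le_of_abs_le_mul_abs measurableSet_Ioo hf' hxf'
      (mul_nonneg hB hL) hcorrection hε hη)
  rw [hsplit]
  linarith [abs_add_le (∫ r in Ioo α β, ζ r * deriv f (r / ε - η))
    (∫ r in Ioo α β, ζ r * (r * J r) * deriv f (r / ε - η))]

end Slice

section Fubini

variable {X S E : Type*} [MeasurableSpace X] [MeasurableSpace S] [NormedAddCommGroup E]
  [NormedSpace ℝ E] {μ : Measure X} {ν : Measure S} [SFinite μ] [SFinite ν]
  {k : X → S → ℝ} {a : S → E} {B L : ℝ}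

lemma integrable_prod_smul_of_integral_abs_le (hk : AEStronglyMeasurable k.uncurry (μ.prod ν))
    (hk_int : ∀ s, Integrable (k · s) μ) (hL : ∀ s, ∫ x, |k x s| ∂μ ≤ L) (ha : Integrable a ν) :
    Integrable (fun p : X × S ↦ k p.1 p.2 • a p.2) (μ.prod ν) := by
  have hka : AEStronglyMeasurable (fun p : X × S ↦ k p.1 p.2 • a p.2) (μ.prod ν) :=
    hk.smul ha.aestronglyMeasurable.comp_snd
  refine (integrable_prod_iff' hka).2 ⟨.of_forall fun s ↦ (hk_int s).smul_const (a s), ?_⟩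
  refine (ha.norm.const_mul L).mono' hka.norm.prod_swap.integral_prod_right'
    (.of_forall fun s ↦ ?_)
  rw [Real.norm_of_nonneg (integral_nonneg fun _ ↦ norm_nonneg _)]
  simp only [norm_smul, integral_mul_const, Real.norm_eq_abs]
  gcongr
  exact hL s

lemma norm_integral_integral_smul_le [CompleteSpace E]
    (hk : AEStronglyMeasurable k.uncurry (μ.prod ν)) (hk_int : ∀ s, Integrable (k · s) μ)
    (hL : ∀ s, ∫ x, |k x s| ∂μ ≤ L) (hB : ∀ s, |∫ x, k x s ∂μ| ≤ B) (ha : Integrable a ν) :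
    ‖∫ x, ∫ s, k x s • a s ∂ν ∂μ‖ ≤ B * ∫ s, ‖a s‖ ∂ν := by
  rw [integral_integral_swap (integrable_prod_smul_of_integral_abs_le hk hk_int hL ha),
    ← integral_const_mul]
  refine norm_integral_le_of_norm_le (ha.norm.const_mul B) (.of_forall fun s ↦ ?_)
  rw [integral_smul_const, norm_smul, Real.norm_eq_abs]
  gcongr
  exact hB s

end Fubini

lemma exists_forall_mem_Ioo_abs_le {φ : ℝ → ℝ} (hφ : Continuous φ) (α β : ℝ) :
    ∃ B, 0 ≤ B ∧ ∀ r ∈ Ioo α β, |φ r| ≤ B := by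
  obtain ⟨B, hB⟩ := (isCompact_Icc (a := α) (b := β)).exists_bound_of_continuousOn hφ.continuousOn
  exact ⟨max B 0, le_max_right _ _,
    fun r hr ↦ (hB r (Ioo_subset_Icc_self hr)).trans (le_max_left _ _)⟩

theorem localized_interface_integral_estimate_general {S : Type*} [MeasurableSpace S]
    {ν : Measure S} [SFinite ν] {f ζ : ℝ → ℝ} {α β : ℝ} (hf : Differentiable ℝ f)
    (hf_int : Integrable f) (hf' : Integrable (deriv f)) (hxf' : Integrable fun x ↦ x * deriv f x)
    (hζ : ContDiff ℝ 1 ζ) (hαβ : α ≤ β) (hα : ζ α = 0) (hβ : ζ β = 0) (M : ℝ) :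
    ∃ C > 0, ∀ h : S → ℝ, Measurable h → (∀ s, |h s| ≤ M) →
      ∀ J₁ : ℝ × S → ℝ, Measurable J₁ → (∀ r ∈ Ioo α β, ∀ s, |J₁ (r, s)| ≤ M) →
      ∀ a : S → ℝ, Integrable a ν → ∀ ε > 0,
      |∫ r in Ioo α β, ∫ s, ζ r * deriv f (r / ε - h s) * a s * (1 + r * J₁ (r, s)) ∂ν|
        ≤ C * ε ^ 2 * ∫ s, |a s| ∂ν := by
  obtain ⟨B, hB, hζB⟩ := exists_forall_mem_Ioo_abs_le hζ.continuous α β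
  obtain ⟨K, hK, hζK⟩ := exists_forall_mem_Ioo_abs_le (hζ.continuous_deriv le_rfl) α β
  let D : ℝ := K * (∫ x, |f x|) + B * M * ∫ x, (|x| + M) * |deriv f x|
  refine ⟨max D 1, by positivity, fun h hh hhM J₁ hJ hJM a ha ε hε ↦ ?_⟩
  have hM (s : S) : 0 ≤ M := (abs_nonneg _).trans (hhM s)
  have hweight (s : S) (r : ℝ) (hr : r ∈ Ioo α β) :
      |ζ r * (1 + r * J₁ (r, s))| ≤ B * (1 + max |α| |β| * M) :=
    abs_mul_one_add_mul_le hζB (fun r hr ↦ hJM r hr s) hr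
  have hζ_meas : Measurable ζ := hζ.continuous.measurable
  let k (r : ℝ) (s : S) : ℝ := ζ r * (1 + r * J₁ (r, s)) * deriv f (r / ε - h s)
  have hk : Measurable k.uncurry := by
    simp only [k, Function.uncurry_def]
    fun_prop
  have hk_int (s : S) : IntegrableOn (k · s) (Ioo α β) :=
    integrableOn_mul_comp_div_sub measurableSet_Ioo hf' (by fun_prop) (hweight s) hε.ne' (h s)
  have hk_abs (s : S) : ∫ r in Ioo α β, |k r s| ≤
      B * (1 + max |α| |β| * M) * ε * ∫ x, |deriv f x| :=
    setIntegral_abs_mul_comp_div_sub_le measurableSet_Ioo hf'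
      (mul_nonneg hB (by have := hM s; positivity)) (hweight s) hε (h s)
  have hk_slice (s : S) : |∫ r in Ioo α β, k r s| ≤ max D 1 * ε ^ 2 :=
    (abs_integral_mul_one_add_mul_deriv_comp_div_sub_le hf hf_int hf' hxf' hζ hαβ hα hβ hB hK
      (hM s) hζB hζK (by fun_prop) (fun r hr ↦ hJM r hr s) hε (hhM s)).trans
      (mul_le_mul_of_nonneg_right (le_max_left D 1) (sq_nonneg ε))
  have hintegrand (r : ℝ) (s : S) :
      ζ r * deriv f (r / ε - h s) * a s * (1 + r * J₁ (r, s)) = k r s • a s := by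
    simp only [k, smul_eq_mul]
    ring
  simpa only [hintegrand, Real.norm_eq_abs] using
    norm_integral_integral_smul_le hk.aestronglyMeasurable hk_int hk_abs hk_slice ha

lemma integrable_id_mul_schwartzMap (g : SchwartzMap ℝ ℝ) : Integrable fun x ↦ x * g x :=
  (g.integrable_pow_mul volume 1).mono (by fun_prop) (by simp)

/-- Localized diffuse-interface integral estimate, in coordinates: for a Schwartz
function f, a cut-off ζ, a bounded height h, a bounded Jacobian correction J₁ and
a ∈ L¹(𝕋¹), the localized integral of ζ(r) f'(r/ε - h(s)) a(s) (1 + r J₁(r,s)) is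
bounded by C ε² ‖a‖_{L¹}. -/
theorem localized_interface_integral_estimate
    (f : SchwartzMap ℝ ℝ) (δ M : ℝ) (hδ : 0 < δ) (hM : 0 < M)
    (ζ : ℝ → ℝ) (hζ : ContDiff ℝ (⊤ : ℕ∞) ζ)
    (hζ1 : ∀ z : ℝ, |z| ≤ δ → ζ z = 1)
    (hζ0 : ∀ z : ℝ, 2*δ ≤ |z| → ζ z = 0) :
    ∃ C > 0, ∀ (h : AddCircle (1:ℝ) → ℝ), Measurable h → (∀ s, |h s| ≤ M) →
      ∀ (J₁ : ℝ × AddCircle (1:ℝ) → ℝ), Measurable J₁ →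
        (∀ r ∈ Ioo (-(2*δ)) (2*δ), ∀ s, |J₁ (r, s)| ≤ M) →
      ∀ (a : AddCircle (1:ℝ) → ℝ), Integrable a →
      ∀ ε : ℝ, ε ∈ Ioc (0:ℝ) 1 →
      |∫ r in Ioo (-(2*δ)) (2*δ), ∫ s : AddCircle (1:ℝ),
          ζ r * deriv f (r/ε - h s) * a s * (1 + r * J₁ (r, s))|
        ≤ C * ε^2 * ∫ s : AddCircle (1:ℝ), |a s| := by
  have hf' : deriv f = SchwartzMap.derivCLM ℝ ℝ f := by
    ext x
    exact (SchwartzMap.derivCLM_apply ℝ f x).symm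
  obtain ⟨C, hC, hCb⟩ := localized_interface_integral_estimate_general
    (ν := (volume : Measure (AddCircle (1:ℝ)))) f.differentiable f.integrable
    (hf' ▸ SchwartzMap.integrable _) (hf' ▸ integrable_id_mul_schwartzMap _)
    (hζ.of_le (mod_cast le_top)) (by linarith) (hζ0 (-(2 * δ)) (by grind))
    (hζ0 (2 * δ) (by grind)) M
  exact ⟨C, hC, fun h hh hhM J₁ hJ hJM a ha ε hε ↦ hCb h hh hhM J₁ hJ hJM a ha ε hε.1⟩
end

section
/- (Localized diffuse-interface integral estimate with cancellation, in coordinates.) Let f ∈ S(ℝ) be a Schwartz function, δ > 0, M > 0, ζ ∈ C^∞(ℝ) with ζ = 1 on [−δ, δ] and ζ = 0 outside (−2δ, 2δ). Consider a Jacobian of the form J(r,s) = 1 + κ(s) r + r² J₂(r,s) with κ ∈ L^∞(𝕋¹), |κ| ≤ M, and |J₂| ≤ M. Then there is C > 0 such that for every measurable h : 𝕋¹ → ℝ with sup_s |h(s)| ≤ M, every ε ∈ (0,1], and all a, b ∈ L¹(𝕋¹) satisfying the cancellation condition ∫_{𝕋¹} ( a(s) κ(s) − b(s) ) ds = 0,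 one has | ∫_{−2δ}^{2δ} ∫_{𝕋¹} ζ(r) ( f'( r/ε − h(s) ) a(s) + ε f( r/ε − h(s) ) b(s) ) J(r,s) ds dr | ≤ C ε³ ( ‖a‖_{L¹(𝕋¹)} + ‖b‖_{L¹(𝕋¹)} ), with C independent of a, b, h, and ε. -/
open MeasureTheory Set

/-!
On a fixed normal slice, integrating `ζ J f'(r/ε - h)` by parts moves the derivative onto the
weight `ζ (1 + κ r)`, at the price of a factor `-ε`. The differentiated weight agrees with `κ` up
to `O(r²)`, and `ζ J` agrees with `1` up to `O(|r|)`. Under the concentration of `f(r/ε - h)` at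
scale `ε`, an error `O(|r|ᵏ)` of the weight costs `O(ε ^ (k + 1))`, so that the slice integral is
`-ε² (∫ f) (a κ - b) + O(ε³ (|a| + |b|))`. Integrating over the slices, the leading term is a
multiple of `∫ (a κ - b)`, which the cancellation condition annihilates.
-/

/-! ### Moments and rescaling -/

/-- Finiteness of the moments of order at most `k` of `g`. The weight `(1 + |x|) ^ k` makes the
condition monotone in `k` and forces `g` itself to be integrable. -/
def HasFiniteMoment (g : ℝ → ℝ) (k : ℕ) : Prop :=
  Integrable fun x => (1 + |x|) ^ k * g x

/-- The absolute moment of order `k` of `g`, with the same weight as in `HasFiniteMoment`. -/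
noncomputable def absMoment (g : ℝ → ℝ) (k : ℕ) : ℝ :=
  ∫ x, (1 + |x|) ^ k * |g x|

theorem HasFiniteMoment.mono {g : ℝ → ℝ} {k l : ℕ} (hg : HasFiniteMoment g l) (hkl : k ≤ l) :
    HasFiniteMoment g k := by
  have hpos (x : ℝ) : 0 < 1 + |x| := by positivity
  have hcont : Continuous fun x : ℝ => ((1 + |x|) ^ (l - k))⁻¹ :=
    Continuous.inv₀ (by fun_prop) fun x => (pow_pos (hpos x) _).ne'
  refine (hg.bdd_mul (c := 1) hcont.aestronglyMeasurable (.of_forall fun x => ?_)).congr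
    (.of_forall fun x => ?_)
  · rw [norm_inv, norm_pow, Real.norm_of_nonneg (hpos x).le]
    exact inv_le_one_of_one_le₀ (one_le_pow₀ (le_add_of_nonneg_right (abs_nonneg x)))
  · have := (hpos x).ne'
    simp only [← pow_mul_pow_sub (1 + |x|) hkl]
    field_simp

theorem HasFiniteMoment.integrable {g : ℝ → ℝ} {k : ℕ} (hg : HasFiniteMoment g k) :
    Integrable g := by
  simpa only [HasFiniteMoment, pow_zero, one_mul] using hg.mono k.zero_le

theorem HasFiniteMoment.integrable_abs {g : ℝ → ℝ} {k : ℕ} (hg : HasFiniteMoment g k) :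
    Integrable fun x => (1 + |x|) ^ k * |g x| :=
  hg.abs.congr (.of_forall fun x => by
    simp only [abs_mul, abs_pow, abs_of_nonneg (add_nonneg zero_le_one (abs_nonneg x))])

theorem hasFiniteMoment_schwartz (f : SchwartzMap ℝ ℝ) (k : ℕ) : HasFiniteMoment f k := by
  have hdom : Integrable fun x => 2 ^ (k - 1) * (‖f x‖ + ‖x‖ ^ k * ‖f x‖) :=
    (f.integrable.norm.add (f.integrable_pow_mul volume k)).const_mul _
  refine hdom.mono' (by fun_prop) (.of_forall fun x => ?_)
  calc ‖(1 + |x|) ^ k * f x‖ = (1 + |x|) ^ k * |f x| := by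
        rw [norm_mul, norm_pow, Real.norm_of_nonneg (by positivity), Real.norm_eq_abs]
    _ ≤ 2 ^ (k - 1) * (1 ^ k + |x| ^ k) * |f x| := by
        gcongr
        exact add_pow_le zero_le_one (abs_nonneg x) k
    _ = 2 ^ (k - 1) * (‖f x‖ + ‖x‖ ^ k * ‖f x‖) := by
        simp only [one_pow, Real.norm_eq_abs]
        ring

theorem integrable_comp_rescale {g : ℝ → ℝ} {ε : ℝ} (hg : Integrable g) (hε : ε ≠ 0) (h : ℝ) :
    Integrable fun r => g (r / ε - h) :=
  (hg.comp_sub_right h).comp_div hε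

theorem integral_comp_rescale (g : ℝ → ℝ) {ε : ℝ} (hε : 0 ≤ ε) (h : ℝ) :
    ∫ r, g (r / ε - h) = ε * ∫ x, g x := by
  rw [Measure.integral_comp_div (fun x => g (x - h)) ε, integral_sub_right_eq_self, smul_eq_mul,
    abs_of_nonneg hε]

theorem abs_le_mul_one_add_abs_rescale {ε h M : ℝ} (hε : 0 < ε) (hh : |h| ≤ M) (r : ℝ) :
    |r| ≤ ε * ((1 + M) * (1 + |r / ε - h|)) := by
  have hr : r = ε * ((r / ε - h) + h) := by field_simp; ring
  have hM : 0 ≤ M := (abs_nonneg h).trans hh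
  calc |r| = ε * |(r / ε - h) + h| := by
        conv_lhs => rw [hr]
        rw [abs_mul, abs_of_pos hε]
    _ ≤ ε * (|r / ε - h| + M) := by
        gcongr
        exact (abs_add_le _ _).trans (by gcongr)
    _ ≤ ε * ((1 + M) * (1 + |r / ε - h|)) := by
        gcongr
        nlinarith [mul_nonneg hM (abs_nonneg (r / ε - h))]

section Concentration

variable {g w : ℝ → ℝ} {k : ℕ} {K c M ε h : ℝ}

theorem abs_sub_mul_comp_rescale_le (hε : 0 < ε) (hh : |h| ≤ M)
    (hwc : ∀ r, |w r - c| ≤ K * |r| ^ k) (r : ℝ) :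
    |(w r - c) * g (r / ε - h)| ≤
      K * (ε * (1 + M)) ^ k * ((1 + |r / ε - h|) ^ k * |g (r / ε - h)|) := by
  have hK : 0 ≤ K := by simpa using (abs_nonneg _).trans (hwc 1)
  calc |(w r - c) * g (r / ε - h)| ≤ K * |r| ^ k * |g (r / ε - h)| := by
        rw [abs_mul]
        gcongr
        exact hwc r
    _ ≤ K * (ε * ((1 + M) * (1 + |r / ε - h|))) ^ k * |g (r / ε - h)| := by
        gcongr
        exact abs_le_mul_one_add_abs_rescale hε hh r
    _ = K * (ε * (1 + M)) ^ k * ((1 + |r / ε - h|) ^ k * |g (r / ε - h)|) := by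
        simp only [mul_pow]
        ring

theorem HasFiniteMoment.integrable_sub_mul_comp_rescale (hg : HasFiniteMoment g k) (hε : 0 < ε)
    (hw : Measurable w) (hwc : ∀ r, |w r - c| ≤ K * |r| ^ k) :
    Integrable fun r => (w r - c) * g (r / ε - h) :=
  ((integrable_comp_rescale hg.integrable_abs hε.ne' h).const_mul _).mono'
    ((hw.sub_const c).aestronglyMeasurable.mul
      (integrable_comp_rescale hg.integrable hε.ne' h).aestronglyMeasurable)
    (.of_forall (abs_sub_mul_comp_rescale_le hε le_rfl hwc))

theorem HasFiniteMoment.integrable_mul_comp_rescale (hg : HasFiniteMoment g k) (hε : 0 < ε)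
    (hw : Measurable w) (hwc : ∀ r, |w r - c| ≤ K * |r| ^ k) :
    Integrable fun r => w r * g (r / ε - h) :=
  ((hg.integrable_sub_mul_comp_rescale hε hw hwc).add
    ((integrable_comp_rescale hg.integrable hε.ne' h).const_mul c)).congr
    (.of_forall fun r => by simp only [Pi.add_apply]; ring)

theorem HasFiniteMoment.abs_integral_mul_comp_rescale_sub_le (hg : HasFiniteMoment g k)
    (hε : 0 < ε) (hh : |h| ≤ M) (hw : Measurable w) (hwc : ∀ r, |w r - c| ≤ K * |r| ^ k) :
    |(∫ r, w r * g (r / ε - h)) - c * (ε * ∫ x, g x)| ≤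
      K * (1 + M) ^ k * absMoment g k * ε ^ (k + 1) := by
  have hsub : (∫ r, w r * g (r / ε - h)) - c * (ε * ∫ x, g x) =
      ∫ r, (w r - c) * g (r / ε - h) := by
    rw [← integral_comp_rescale g hε.le h, ← integral_const_mul, ← integral_sub
      (hg.integrable_mul_comp_rescale hε hw hwc)
      ((integrable_comp_rescale hg.integrable hε.ne' h).const_mul c)]
    simp only [sub_mul]
  rw [hsub]
  calc |∫ r, (w r - c) * g (r / ε - h)|
      ≤ ∫ r, K * (ε * (1 + M)) ^ k * ((1 + |r / ε - h|) ^ k * |g (r / ε - h)|) := by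
        rw [← Real.norm_eq_abs]
        exact norm_integral_le_of_norm_le
          ((integrable_comp_rescale hg.integrable_abs hε.ne' h).const_mul _)
          (.of_forall (abs_sub_mul_comp_rescale_le hε hh hwc))
    _ = K * (1 + M) ^ k * absMoment g k * ε ^ (k + 1) := by
        rw [integral_const_mul,
          integral_comp_rescale (fun x => (1 + |x|) ^ k * |g x|) hε.le h, ← absMoment, mul_pow]
        ring

end Concentration

theorem integral_mul_deriv_comp_rescale {φ φ' f : ℝ → ℝ} {ε h : ℝ} (hε : ε ≠ 0)
    (hφ : ∀ r, HasDerivAt φ (φ' r) r) (hf : Differentiable ℝ f)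
    (hφf' : Integrable fun r => φ r * deriv f (r / ε - h))
    (hφ'f : Integrable fun r => φ' r * f (r / ε - h))
    (hφf : Integrable fun r => φ r * f (r / ε - h)) :
    ∫ r, φ r * deriv f (r / ε - h) = -(ε * ∫ r, φ' r * f (r / ε - h)) := by
  have hinner (r : ℝ) : HasDerivAt (fun r => ε * f (r / ε - h)) (deriv f (r / ε - h)) r := by
    have := ((hf (r / ε - h)).hasDerivAt.comp r
      (((hasDerivAt_id r).div_const ε).sub_const h)).const_mul ε
    rwa [mul_one_div, mul_div_cancel₀ _ hε] at this
  rw [← integral_const_mul]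
  simp only [mul_left_comm ε]
  refine integral_mul_deriv_eq_deriv_mul_of_integrable (fun r _ => hφ r) (fun r _ => hinner r)
    hφf' ?_ ?_
  · exact (hφ'f.const_mul ε).congr (.of_forall fun r => mul_left_comm _ _ _)
  · exact (hφf.const_mul ε).congr (.of_forall fun r => mul_left_comm _ _ _)

/-! ### The cutoff and the Jacobian -/

/-- A continuously differentiable cutoff that equals one on `[-δ, δ]` and vanishes outside
`(-R, R)`. -/
structure IsPlateauCutoff (ζ : ℝ → ℝ) (δ R : ℝ) : Prop where
  contDiff : ContDiff ℝ 1 ζ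
  plateau_pos : 0 < δ
  eq_one : ∀ r, |r| ≤ δ → ζ r = 1
  eq_zero : ∀ r, r ∉ Ioo (-R) R → ζ r = 0

/-- The Jacobian `1 + κ r + r² J₂` of tubular coordinates along the normal slice through a point
of curvature `κ`, where `W` is the restriction of `J₂` to that slice. -/
def sliceJacobian (κ : ℝ) (W : ℝ → ℝ) (r : ℝ) : ℝ :=
  1 + κ * r + r ^ 2 * W r

theorem abs_le_div_pow_mul_abs_pow {u : ℝ → ℝ} {B δ : ℝ} (hδ : 0 < δ) (hB : ∀ r, |u r| ≤ B)
    (hu : ∀ r, |r| < δ → u r = 0) (k : ℕ) (r : ℝ) : |u r| ≤ B / δ ^ k * |r| ^ k := by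
  have hB0 : 0 ≤ B := (abs_nonneg _).trans (hB 0)
  rcases lt_or_ge |r| δ with hr | hr
  · rw [hu r hr, abs_zero]
    positivity
  · calc |u r| ≤ B := hB r
      _ = B / δ ^ k * δ ^ k := by field_simp
      _ ≤ B / δ ^ k * |r| ^ k := by gcongr

theorem measurable_sliceJacobian {W : ℝ → ℝ} (κ : ℝ) (hW : Measurable W) :
    Measurable (sliceJacobian κ W) := by
  unfold sliceJacobian
  fun_prop

theorem abs_sliceJacobian_sub_one_le {κ M R r : ℝ} {W : ℝ → ℝ} (hκ : |κ| ≤ M)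
    (hr : r ∈ Ioo (-R) R) (hW : |W r| ≤ M) :
    |sliceJacobian κ W r - 1| ≤ M * (1 + R) * |r| := by
  have hrR : |r| ≤ R := (abs_lt.2 hr).le
  have hR : 0 ≤ R := (abs_nonneg r).trans hrR
  calc |sliceJacobian κ W r - 1| = |κ * r + r * r * W r| := by
        rw [sliceJacobian]
        congr 1
        ring
    _ ≤ |κ| * |r| + |r| * |r| * |W r| := by
        simpa only [abs_mul] using abs_add_le (κ * r) (r * r * W r)
    _ ≤ M * |r| + R * |r| * M := by gcongr
    _ = M * (1 + R) * |r| := by ring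

namespace IsPlateauCutoff

variable {ζ : ℝ → ℝ} {δ R : ℝ}

theorem radius_pos (hζ : IsPlateauCutoff ζ δ R) : 0 < R := by
  by_contra! hR
  have h0 := hζ.eq_zero 0 fun h => hR.not_gt h.2
  rw [hζ.eq_one 0 (by simpa using hζ.plateau_pos.le)] at h0
  exact one_ne_zero h0

theorem measurable (hζ : IsPlateauCutoff ζ δ R) : Measurable ζ :=
  hζ.contDiff.continuous.measurable

theorem hasDerivAt (hζ : IsPlateauCutoff ζ δ R) (r : ℝ) : HasDerivAt ζ (deriv ζ r) r :=
  (hζ.contDiff.differentiable one_ne_zero r).hasDerivAt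

theorem deriv_eq_zero (hζ : IsPlateauCutoff ζ δ R) {r : ℝ} (hr : |r| < δ) : deriv ζ r = 0 := by
  have hloc : ζ =ᶠ[nhds r] fun _ => 1 := by
    filter_upwards [(isOpen_lt continuous_abs continuous_const).mem_nhds hr] with z hz
    exact hζ.eq_one z (le_of_lt hz)
  rw [hloc.deriv_eq, deriv_const]

theorem exists_bound (hζ : IsPlateauCutoff ζ δ R) :
    ∃ B, 0 ≤ B ∧ (∀ r, |ζ r| ≤ B) ∧ ∀ r, |deriv ζ r| ≤ B := by
  have hsupp : HasCompactSupport ζ :=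
    .intro isCompact_Icc fun r hr => hζ.eq_zero r fun hr' => hr (Ioo_subset_Icc_self hr')
  obtain ⟨B, hB⟩ := hsupp.exists_bound_of_continuous hζ.contDiff.continuous
  obtain ⟨B', hB'⟩ := hsupp.deriv.exists_bound_of_continuous (hζ.contDiff.continuous_deriv le_rfl)
  exact ⟨max B B', (norm_nonneg _).trans ((hB 0).trans (le_max_left _ _)),
    fun r => (hB r).trans (le_max_left _ _), fun r => (hB' r).trans (le_max_right _ _)⟩

theorem abs_sub_one_le (hζ : IsPlateauCutoff ζ δ R) {B : ℝ} (hB : ∀ r, |ζ r| ≤ B) (k : ℕ) (r : ℝ) :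
    |ζ r - 1| ≤ (B + 1) / δ ^ k * |r| ^ k := by
  refine abs_le_div_pow_mul_abs_pow (u := fun r => ζ r - 1) hζ.plateau_pos (fun r => ?_)
    (fun r hr => sub_eq_zero.2 (hζ.eq_one r hr.le)) k r
  exact (abs_sub _ _).trans (by simpa using hB r)

theorem abs_deriv_le (hζ : IsPlateauCutoff ζ δ R) {B : ℝ} (hB : ∀ r, |deriv ζ r| ≤ B) (k : ℕ)
    (r : ℝ) : |deriv ζ r| ≤ B / δ ^ k * |r| ^ k :=
  abs_le_div_pow_mul_abs_pow hζ.plateau_pos hB (fun _ => hζ.deriv_eq_zero) k r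

theorem exists_abs_mul_sliceJacobian_le (hζ : IsPlateauCutoff ζ δ R) (M : ℝ) :
    ∃ L, ∀ κ W r, |κ| ≤ M → (∀ r ∈ Ioo (-R) R, |W r| ≤ M) → |ζ r * sliceJacobian κ W r| ≤ L := by
  obtain ⟨B, hB0, hB, -⟩ := hζ.exists_bound
  have hR := hζ.radius_pos
  refine ⟨B * (1 + M * (1 + R) * R), fun κ W r hκ hW => ?_⟩
  have hM : 0 ≤ M := (abs_nonneg κ).trans hκ
  by_cases hr : r ∈ Ioo (-R) R
  · have hrR : |r| ≤ R := (abs_lt.2 hr).le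
    have hJ : |sliceJacobian κ W r| ≤ 1 + M * (1 + R) * R := by
      calc |sliceJacobian κ W r| = |1 + (sliceJacobian κ W r - 1)| := by rw [add_sub_cancel]
        _ ≤ 1 + |sliceJacobian κ W r - 1| := by simpa using abs_add_le 1 (sliceJacobian κ W r - 1)
        _ ≤ 1 + M * (1 + R) * |r| := by
            gcongr
            exact abs_sliceJacobian_sub_one_le hκ hr (hW r hr)
        _ ≤ 1 + M * (1 + R) * R := by gcongr
    rw [abs_mul]
    gcongr
    exact hB r
  · rw [hζ.eq_zero r hr, zero_mul, abs_zero]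
    positivity

theorem exists_abs_mul_sliceJacobian_sub_one_le (hζ : IsPlateauCutoff ζ δ R) (M : ℝ) :
    ∃ K, ∀ κ W r, |κ| ≤ M → (∀ r ∈ Ioo (-R) R, |W r| ≤ M) →
      |ζ r * sliceJacobian κ W r - 1| ≤ K * |r| ^ 1 := by
  obtain ⟨B, hB0, hB, -⟩ := hζ.exists_bound
  have hR := hζ.radius_pos
  refine ⟨(B + 1) / δ ^ 1 + B * (M * (1 + R)), fun κ W r hκ hW => ?_⟩
  have hM : 0 ≤ M := (abs_nonneg κ).trans hκ
  have herr : |ζ r * (sliceJacobian κ W r - 1)| ≤ B * (M * (1 + R)) * |r| ^ 1 := by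
    by_cases hr : r ∈ Ioo (-R) R
    · rw [abs_mul, mul_assoc B, pow_one]
      gcongr
      · exact hB r
      · exact abs_sliceJacobian_sub_one_le hκ hr (hW r hr)
    · rw [hζ.eq_zero r hr, zero_mul, abs_zero]
      positivity
  calc |ζ r * sliceJacobian κ W r - 1|
      = |(ζ r - 1) + ζ r * (sliceJacobian κ W r - 1)| := by congr 1; ring
    _ ≤ |ζ r - 1| + |ζ r * (sliceJacobian κ W r - 1)| := abs_add_le _ _
    _ ≤ (B + 1) / δ ^ 1 * |r| ^ 1 + B * (M * (1 + R)) * |r| ^ 1 :=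
        add_le_add (hζ.abs_sub_one_le hB 1 r) herr
    _ = ((B + 1) / δ ^ 1 + B * (M * (1 + R))) * |r| ^ 1 := by ring

theorem hasDerivAt_mul_one_add (hζ : IsPlateauCutoff ζ δ R) (κ r : ℝ) :
    HasDerivAt (fun r => ζ r * (1 + κ * r)) (deriv ζ r * (1 + κ * r) + ζ r * κ) r := by
  simpa only [id, mul_one] using
    (hζ.hasDerivAt r).fun_mul (((hasDerivAt_id r).const_mul κ).const_add 1)

theorem exists_abs_deriv_mul_one_add_sub_le (hζ : IsPlateauCutoff ζ δ R) (M : ℝ) :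
    ∃ K, ∀ κ r, |κ| ≤ M → |deriv ζ r * (1 + κ * r) + ζ r * κ - κ| ≤ K * |r| ^ 2 := by
  obtain ⟨B, hB0, hB, hB'⟩ := hζ.exists_bound
  have hδ := hζ.plateau_pos
  refine ⟨B / δ ^ 2 + B / δ ^ 1 * M + (B + 1) / δ ^ 2 * M, fun κ r hκ => ?_⟩
  calc |deriv ζ r * (1 + κ * r) + ζ r * κ - κ|
      = |deriv ζ r + deriv ζ r * κ * r + (ζ r - 1) * κ| := by congr 1; ring
    _ ≤ |deriv ζ r| + |deriv ζ r| * |κ| * |r| + |ζ r - 1| * |κ| := by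
        simpa only [abs_mul] using
          abs_add_three (deriv ζ r) (deriv ζ r * κ * r) ((ζ r - 1) * κ)
    _ ≤ B / δ ^ 2 * |r| ^ 2 + B / δ ^ 1 * |r| ^ 1 * M * |r| + (B + 1) / δ ^ 2 * |r| ^ 2 * M := by
        gcongr
        · exact hζ.abs_deriv_le hB' 2 r
        · exact hζ.abs_deriv_le hB' 1 r
        · exact hζ.abs_sub_one_le hB 2 r
    _ = (B / δ ^ 2 + B / δ ^ 1 * M + (B + 1) / δ ^ 2 * M) * |r| ^ 2 := by ring

theorem exists_abs_mul_sq_mul_le (hζ : IsPlateauCutoff ζ δ R) {M : ℝ} (hM : 0 ≤ M) :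
    ∃ K, ∀ (W : ℝ → ℝ) r, (∀ r ∈ Ioo (-R) R, |W r| ≤ M) → |ζ r * (r ^ 2 * W r)| ≤ K * |r| ^ 2 := by
  obtain ⟨B, hB0, hB, -⟩ := hζ.exists_bound
  refine ⟨B * M, fun W r hW => ?_⟩
  by_cases hr : r ∈ Ioo (-R) R
  · calc |ζ r * (r ^ 2 * W r)| = |ζ r| * |W r| * |r| ^ 2 := by
          rw [abs_mul, abs_mul, abs_pow]
          ring
      _ ≤ B * M * |r| ^ 2 := by
          gcongr
          exacts [hB r, hW r hr]
  · rw [hζ.eq_zero r hr, zero_mul, abs_zero]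
    positivity

/-! ### Normal slices -/

variable {f : ℝ → ℝ} {M : ℝ}

theorem exists_abs_integral_mul_sliceJacobian_sub_le (hζ : IsPlateauCutoff ζ δ R)
    (hf : HasFiniteMoment f 1) :
    ∃ C, ∀ κ W h ε, |κ| ≤ M → Measurable W → (∀ r ∈ Ioo (-R) R, |W r| ≤ M) → |h| ≤ M → 0 < ε →
      |(∫ r, ζ r * sliceJacobian κ W r * f (r / ε - h)) - ε * ∫ x, f x| ≤ C * ε ^ 2 := by
  obtain ⟨K, hK⟩ := hζ.exists_abs_mul_sliceJacobian_sub_one_le M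
  refine ⟨K * (1 + M) ^ 1 * absMoment f 1, fun κ W h ε hκ hWm hW hh hε => ?_⟩
  have hVm : Measurable fun r => ζ r * sliceJacobian κ W r :=
    hζ.measurable.mul (measurable_sliceJacobian κ hWm)
  simpa only [one_mul] using
    hf.abs_integral_mul_comp_rescale_sub_le hε hh hVm fun r => hK κ W r hκ hW

theorem exists_abs_integral_mul_one_add_mul_deriv_add_le (hζ : IsPlateauCutoff ζ δ R)
    (hf : Differentiable ℝ f) (hf2 : HasFiniteMoment f 2) (hf' : HasFiniteMoment (deriv f) 1) :
    ∃ C, ∀ κ h ε, |κ| ≤ M → |h| ≤ M → ε ∈ Ioc (0 : ℝ) 1 →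
      |(∫ r, ζ r * (1 + κ * r) * deriv f (r / ε - h)) + ε ^ 2 * κ * ∫ x, f x| ≤ C * ε ^ 3 := by
  obtain ⟨K, hK⟩ := hζ.exists_abs_mul_sliceJacobian_sub_one_le M
  obtain ⟨K', hK'⟩ := hζ.exists_abs_deriv_mul_one_add_sub_le M
  refine ⟨K' * (1 + M) ^ 2 * absMoment f 2, fun κ h ε hκ hh hε => ?_⟩
  have hM : 0 ≤ M := (abs_nonneg κ).trans hκ
  have hφ (r : ℝ) : |ζ r * (1 + κ * r) - 1| ≤ K * |r| ^ 1 := by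
    simpa [sliceJacobian] using hK κ 0 r hκ fun _ _ => by simpa using hM
  have hφm : Measurable fun r => ζ r * (1 + κ * r) := hζ.measurable.mul (by fun_prop)
  have hφ'm : Measurable fun r => deriv ζ r * (1 + κ * r) + ζ r * κ :=
    ((measurable_deriv ζ).mul (by fun_prop)).add (hζ.measurable.mul_const κ)
  have hest := hf2.abs_integral_mul_comp_rescale_sub_le hε.1 hh hφ'm fun r => hK' κ r hκ
  rw [integral_mul_deriv_comp_rescale hε.1.ne' (hζ.hasDerivAt_mul_one_add κ) hf
    (hf'.integrable_mul_comp_rescale hε.1 hφm hφ)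
    (hf2.integrable_mul_comp_rescale hε.1 hφ'm fun r => hK' κ r hκ)
    ((hf2.mono one_le_two).integrable_mul_comp_rescale hε.1 hφm hφ)]
  set I := ∫ r, (deriv ζ r * (1 + κ * r) + ζ r * κ) * f (r / ε - h)
  calc |-(ε * I) + ε ^ 2 * κ * ∫ x, f x| = ε * |I - κ * (ε * ∫ x, f x)| := by
        rw [← abs_of_pos hε.1, ← abs_mul, ← abs_neg, abs_of_pos hε.1]
        congr 1
        ring
    _ ≤ 1 * |I - κ * (ε * ∫ x, f x)| := by
        gcongr
        exact hε.2
    _ ≤ K' * (1 + M) ^ 2 * absMoment f 2 * ε ^ 3 := by simpa only [one_mul] using hest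

theorem exists_abs_integral_mul_sliceJacobian_mul_deriv_add_le (hζ : IsPlateauCutoff ζ δ R)
    (hM : 0 ≤ M) (hf : Differentiable ℝ f) (hf2 : HasFiniteMoment f 2)
    (hf'2 : HasFiniteMoment (deriv f) 2) :
    ∃ C, ∀ κ W h ε, |κ| ≤ M → Measurable W → (∀ r ∈ Ioo (-R) R, |W r| ≤ M) → |h| ≤ M →
      ε ∈ Ioc (0 : ℝ) 1 →
      |(∫ r, ζ r * sliceJacobian κ W r * deriv f (r / ε - h)) + ε ^ 2 * κ * ∫ x, f x| ≤
        C * ε ^ 3 := by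
  obtain ⟨C, hC⟩ := hζ.exists_abs_integral_mul_one_add_mul_deriv_add_le (M := M) hf hf2
    (hf'2.mono one_le_two)
  obtain ⟨K, hK⟩ := hζ.exists_abs_mul_sliceJacobian_sub_one_le M
  obtain ⟨K', hK'⟩ := hζ.exists_abs_mul_sq_mul_le hM
  refine ⟨C + K' * (1 + M) ^ 2 * absMoment (deriv f) 2, fun κ W h ε hκ hWm hW hh hε => ?_⟩
  have hφ (r : ℝ) : |ζ r * (1 + κ * r) - 1| ≤ K * |r| ^ 1 := by
    simpa [sliceJacobian] using hK κ 0 r hκ fun _ _ => by simpa using hM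
  have hψ (r : ℝ) : |ζ r * (r ^ 2 * W r) - 0| ≤ K' * |r| ^ 2 := by
    simpa only [sub_zero] using hK' W r hW
  have hφm : Measurable fun r => ζ r * (1 + κ * r) := hζ.measurable.mul (by fun_prop)
  have hψm : Measurable fun r => ζ r * (r ^ 2 * W r) := hζ.measurable.mul (by fun_prop)
  have hsplit : ∫ r, ζ r * sliceJacobian κ W r * deriv f (r / ε - h) =
      (∫ r, ζ r * (1 + κ * r) * deriv f (r / ε - h)) +
        ∫ r, ζ r * (r ^ 2 * W r) * deriv f (r / ε - h) := by
    rw [← integral_add ((hf'2.mono one_le_two).integrable_mul_comp_rescale hε.1 hφm hφ)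
      (hf'2.integrable_mul_comp_rescale hε.1 hψm hψ)]
    simp only [sliceJacobian, mul_add, add_mul]
  have hrem := hf'2.abs_integral_mul_comp_rescale_sub_le hε.1 hh hψm hψ
  rw [zero_mul, sub_zero] at hrem
  rw [hsplit, add_right_comm, add_mul]
  exact (abs_add_le _ _).trans (add_le_add (hC κ h ε hκ hh hε) hrem)

theorem exists_abs_slice_integral_add_le (hζ : IsPlateauCutoff ζ δ R)
    (hM : 0 ≤ M) (hf : Differentiable ℝ f) (hf2 : HasFiniteMoment f 2)
    (hf'2 : HasFiniteMoment (deriv f) 2) :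
    ∃ C > 0, ∀ κ W h ε α β, |κ| ≤ M → Measurable W → (∀ r ∈ Ioo (-R) R, |W r| ≤ M) → |h| ≤ M →
      ε ∈ Ioc (0 : ℝ) 1 →
      |(∫ r, ζ r * (deriv f (r / ε - h) * α + ε * f (r / ε - h) * β) * sliceJacobian κ W r) +
        ε ^ 2 * (∫ x, f x) * (α * κ - β)| ≤ C * ε ^ 3 * (|α| + |β|) := by
  obtain ⟨C₀, hC₀⟩ :=
    hζ.exists_abs_integral_mul_sliceJacobian_sub_le (M := M) (hf2.mono one_le_two)
  obtain ⟨C₁, hC₁⟩ := hζ.exists_abs_integral_mul_sliceJacobian_mul_deriv_add_le hM hf hf2 hf'2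
  obtain ⟨K, hK⟩ := hζ.exists_abs_mul_sliceJacobian_sub_one_le M
  refine ⟨max (max C₀ C₁) 1, by positivity, fun κ W h ε α β hκ hWm hW hh hε => ?_⟩
  set C := max (max C₀ C₁) 1
  have hCC₀ : C₀ ≤ C := (le_max_left _ _).trans (le_max_left _ _)
  have hCC₁ : C₁ ≤ C := (le_max_right _ _).trans (le_max_left _ _)
  have hε0 := hε.1
  set X := ∫ r, ζ r * sliceJacobian κ W r * f (r / ε - h) with hX
  set Y := ∫ r, ζ r * sliceJacobian κ W r * deriv f (r / ε - h) with hY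
  have hsplit : ∫ r, ζ r * (deriv f (r / ε - h) * α + ε * f (r / ε - h) * β) *
      sliceJacobian κ W r = α * Y + ε * β * X := by
    have hVm : Measurable fun r => ζ r * sliceJacobian κ W r :=
      hζ.measurable.mul (measurable_sliceJacobian κ hWm)
    have hV (r : ℝ) := hK κ W r hκ hW
    rw [hX, hY, ← integral_const_mul, ← integral_const_mul, ← integral_add
      (((hf'2.mono one_le_two).integrable_mul_comp_rescale hε0 hVm hV).const_mul α)
      (((hf2.mono one_le_two).integrable_mul_comp_rescale hε0 hVm hV).const_mul (ε * β))]
    congr 1 with r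
    ring
  calc _ = |α * (Y + ε ^ 2 * κ * ∫ x, f x) + ε * β * (X - ε * ∫ x, f x)| := by
        rw [hsplit]
        congr 1
        ring
    _ ≤ |α| * |Y + ε ^ 2 * κ * ∫ x, f x| + ε * |β| * |X - ε * ∫ x, f x| :=
        (abs_add_le _ _).trans_eq (by rw [abs_mul, abs_mul, abs_mul, abs_of_pos hε0])
    _ ≤ |α| * (C * ε ^ 3) + ε * |β| * (C * ε ^ 2) := by
        gcongr
        · exact (hC₁ κ W h ε hκ hWm hW hh hε).trans (by gcongr)
        · exact (hC₀ κ W h ε hκ hWm hW hh hε0).trans (by gcongr)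
    _ = C * ε ^ 3 * (|α| + |β|) := by ring

end IsPlateauCutoff

/-! ### Integration over the slices -/

section Product

variable {S : Type*} [MeasurableSpace S] {μ : Measure S} [SFinite μ]

theorem integrable_prod_comp_rescale_mul {g : ℝ → ℝ} {h a : S → ℝ} {ε : ℝ} (hg : Integrable g)
    (hgm : Measurable g) (hε : 0 < ε) (hh : Measurable h) (ha : Integrable a μ) :
    Integrable (fun p : ℝ × S => g (p.1 / ε - h p.2) * a p.2) (volume.prod μ) := by
  have hgh : Measurable fun p : ℝ × S => g (p.1 / ε - h p.2) := by fun_prop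
  have hmeas : AEStronglyMeasurable (fun p : ℝ × S => g (p.1 / ε - h p.2) * a p.2)
      (volume.prod μ) := hgh.aestronglyMeasurable.mul ha.aestronglyMeasurable.comp_snd
  rw [integrable_prod_iff' hmeas]
  refine ⟨.of_forall fun s => (integrable_comp_rescale hg hε.ne' (h s)).mul_const (a s), ?_⟩
  simp only [norm_mul, integral_mul_const, integral_comp_rescale (fun x => ‖g x‖) hε.le]
  exact ha.norm.const_mul _

theorem IsPlateauCutoff.integrable_interface {f ζ : ℝ → ℝ} {δ R M ε : ℝ} {κ h a b : S → ℝ}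
    {J₂ : ℝ × S → ℝ} (hζ : IsPlateauCutoff ζ δ R) (hf : Differentiable ℝ f)
    (hfi : Integrable f) (hf'i : Integrable (deriv f))
    (hκm : Measurable κ) (hκ : ∀ s, |κ s| ≤ M) (hJ₂m : Measurable J₂)
    (hJ₂ : ∀ r ∈ Ioo (-R) R, ∀ s, |J₂ (r, s)| ≤ M) (hh : Measurable h) (hε : 0 < ε)
    (ha : Integrable a μ) (hb : Integrable b μ) :
    Integrable (Function.uncurry fun r s => ζ r * (deriv f (r / ε - h s) * a s +
      ε * f (r / ε - h s) * b s) * (1 + κ s * r + r ^ 2 * J₂ (r, s))) (volume.prod μ) := by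
  obtain ⟨L, hL⟩ := hζ.exists_abs_mul_sliceJacobian_le M
  have hζm := hζ.measurable
  have hVm : Measurable fun p : ℝ × S =>
      ζ p.1 * sliceJacobian (κ p.2) (fun r => J₂ (r, p.2)) p.1 := by
    unfold sliceJacobian
    fun_prop
  have hprofile := (integrable_prod_comp_rescale_mul hf'i (measurable_deriv f) hε hh ha).add
    ((integrable_prod_comp_rescale_mul hfi hf.continuous.measurable hε hh hb).const_mul ε)
  refine (hprofile.bdd_mul (c := L) hVm.aestronglyMeasurable (.of_forall fun p => ?_)).congr
    (.of_forall fun p => ?_)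
  · exact hL _ _ _ (hκ p.2) fun r hr => hJ₂ r hr p.2
  · simp only [Pi.add_apply, sliceJacobian, Function.uncurry]
    ring

theorem localized_interface_integral_estimate_cancellation_general
    {f ζ : ℝ → ℝ} {δ R M : ℝ} (hf : Differentiable ℝ f) (hf2 : HasFiniteMoment f 2)
    (hf'2 : HasFiniteMoment (deriv f) 2) (hζ : IsPlateauCutoff ζ δ R) (hM : 0 ≤ M) :
    ∃ C > 0, ∀ (κ : S → ℝ) (J₂ : ℝ × S → ℝ), Measurable κ → (∀ s, |κ s| ≤ M) →
      Measurable J₂ → (∀ r ∈ Ioo (-R) R, ∀ s, |J₂ (r, s)| ≤ M) →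
      ∀ h : S → ℝ, Measurable h → (∀ s, |h s| ≤ M) → ∀ ε : ℝ, ε ∈ Ioc (0 : ℝ) 1 →
      ∀ a b : S → ℝ, Integrable a μ → Integrable b μ →
      |(∫ r in Ioo (-R) R, ∫ s, ζ r * (deriv f (r / ε - h s) * a s + ε * f (r / ε - h s) * b s) *
          (1 + κ s * r + r ^ 2 * J₂ (r, s)) ∂μ) +
          ε ^ 2 * (∫ x, f x) * ∫ s, (a s * κ s - b s) ∂μ| ≤
        C * ε ^ 3 * ((∫ s, |a s| ∂μ) + ∫ s, |b s| ∂μ) := by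
  obtain ⟨C, hC, hslice⟩ := hζ.exists_abs_slice_integral_add_le hM hf hf2 hf'2
  refine ⟨C, hC, fun κ J₂ hκm hκ hJ₂m hJ₂ h hhm hh ε hε a b ha hb => ?_⟩
  have hint := hζ.integrable_interface hf hf2.integrable hf'2.integrable hκm hκ hJ₂m hJ₂ hhm hε.1
    ha hb
  have hslices := hint.integral_prod_right
  simp only [Function.uncurry_apply_pair] at hslices
  have hlead : Integrable (fun s => ε ^ 2 * (∫ x, f x) * (a s * κ s - b s)) μ :=
    ((ha.mul_bdd hκm.aestronglyMeasurable (.of_forall hκ)).sub hb).const_mul _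
  rw [setIntegral_eq_integral_of_forall_compl_eq_zero fun r hr => by
      simp only [hζ.eq_zero r hr, zero_mul, integral_zero],
    integral_integral_swap hint, ← integral_const_mul (ε ^ 2 * ∫ x, f x),
    ← integral_add hslices hlead, ← integral_add ha.abs hb.abs,
    ← integral_const_mul (C * ε ^ 3), ← Real.norm_eq_abs]
  refine norm_integral_le_of_norm_le ((ha.abs.add hb.abs).const_mul _) (.of_forall fun s => ?_)
  exact hslice (κ s) (fun r => J₂ (r, s)) (h s) ε (a s) (b s) (hκ s) (by fun_prop)
    (fun r hr => hJ₂ r hr s) (hh s) hε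

end Product

/-- Localized diffuse-interface integral estimate with cancellation, in coordinates:
with Jacobian J(r,s) = 1 + κ(s) r + r² J₂(r,s) and the cancellation condition
∫_{𝕋¹} (a κ - b) ds = 0, the localized integral of
ζ(r) ( f'(r/ε - h(s)) a(s) + ε f(r/ε - h(s)) b(s) ) J(r,s) is O(ε³ (‖a‖_{L¹}+‖b‖_{L¹})). -/
theorem localized_interface_integral_estimate_cancellation
    (f : SchwartzMap ℝ ℝ) (δ M : ℝ) (hδ : 0 < δ) (hM : 0 < M)
    (ζ : ℝ → ℝ) (hζ : ContDiff ℝ (⊤ : ℕ∞) ζ)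
    (hζ1 : ∀ z : ℝ, |z| ≤ δ → ζ z = 1)
    (hζ0 : ∀ z : ℝ, z ∉ Ioo (-(2*δ)) (2*δ) → ζ z = 0)
    (κ : AddCircle (1:ℝ) → ℝ) (hκm : Measurable κ) (hκ : ∀ s, |κ s| ≤ M)
    (J₂ : ℝ × AddCircle (1:ℝ) → ℝ) (hJ₂m : Measurable J₂)
    (hJ₂ : ∀ r ∈ Ioo (-(2*δ)) (2*δ), ∀ s, |J₂ (r, s)| ≤ M) :
    ∃ C > 0, ∀ (h : AddCircle (1:ℝ) → ℝ), Measurable h → (∀ s, |h s| ≤ M) →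
      ∀ ε : ℝ, ε ∈ Ioc (0:ℝ) 1 →
      ∀ (a b : AddCircle (1:ℝ) → ℝ), Integrable a → Integrable b →
        (∫ s : AddCircle (1:ℝ), (a s * κ s - b s)) = 0 →
      |∫ r in Ioo (-(2*δ)) (2*δ), ∫ s : AddCircle (1:ℝ),
          ζ r * (deriv f (r/ε - h s) * a s + ε * f (r/ε - h s) * b s)
            * (1 + κ s * r + r^2 * J₂ (r, s))|
        ≤ C * ε^3 * ((∫ s : AddCircle (1:ℝ), |a s|) + ∫ s : AddCircle (1:ℝ), |b s|) := by
  have hζ' : IsPlateauCutoff ζ δ (2 * δ) := ⟨hζ.of_le (by simp), hδ, hζ1, hζ0⟩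
  have hf' : HasFiniteMoment (deriv f) 2 := hasFiniteMoment_schwartz (SchwartzMap.derivCLM ℝ ℝ f) 2
  obtain ⟨C, hC, hest⟩ := localized_interface_integral_estimate_cancellation_general
    (S := AddCircle (1 : ℝ)) (μ := volume) f.differentiable (hasFiniteMoment_schwartz f 2) hf' hζ'
    hM.le
  refine ⟨C, hC, fun h hhm hh ε hε a b ha hb hab => ?_⟩
  simpa only [hab, mul_zero, add_zero] using
    hest κ J₂ hκm hκ hJ₂m hJ₂ h hhm hh ε hε a b ha hb
end

section
/- (Trace-difference estimate against the profile derivative, in coordinates.) Let f be a smooth double-well potential, θ₀ the optimal profile, δ > 0, M > 0. Then there is C > 0 such that for every measurable h : 𝕋¹ → ℝ with sup_s |h(s)| ≤ M, every ε ∈ (0,1], and every w ∈ H¹((−2δ,2δ) × 𝕋¹): ∫_{−2δ}^{2δ} ∫_{𝕋¹} | w(r,s) − w(0,s) | θ₀'( r/ε − h(s) ) ds dr ≤ C ε^{3/2} ‖∂_r w‖_{L²((−2δ,2δ)×𝕋¹)}, where w(0,s) denotes the trace at r = 0 of the (for a.e. s absolutely continuous) function r ↦ w(r,s). -/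
open MeasureTheory Set Filter

/-!
Since `f'' > 0` at the wells, `u = θ₀ ∓ 1` satisfies `k² u² ≤ u u''` near `±∞` for some `k > 0`, so
a maximum principle compares `|u|` with the barrier `exp (-k |ρ|)`. The equation transfers this
decay to `θ₀''`, and a Landau-type interpolation between `u` and `u''` transfers it to `θ₀'`.

On each slice, Cauchy–Schwarz gives `|w(r, s) - w(0, s)| ≤ √|r| ‖∂_r w(·, s)‖_{L²}`. As `h` is
bounded, `θ₀'(r / ε - h(s))` is dominated by a multiple of `exp (-k |r| / ε)`, and rescaling
`r = ε ρ` in `∫ √|r| exp (-k |r| / ε) dr` produces the factor `ε^{3/2}`. Cauchy–Schwarz in `s`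
concludes.
-/

section Decay

open Asymptotics

lemma nonpos_of_tendsto_zero_of_deriv2_pos {v v' v'' : ℝ → ℝ} {R : ℝ}
    (hv : ∀ x ≥ R, HasDerivAt v (v' x) x) (hv' : ∀ x > R, HasDerivAt v' (v'' x) x)
    (hR : v R ≤ 0) (hlim : Tendsto v atTop (nhds 0)) (hpos : ∀ x > R, 0 < v x → 0 < v'' x) :
    ∀ x ≥ R, v x ≤ 0 := by
  intro x hx
  by_contra! hvx
  have hfar : ∀ᶠ y in cocompact ℝ ⊓ 𝓟 (Ici R), v y ≤ v x := by
    rw [eventually_inf_principal, cocompact_eq_atBot_atTop, eventually_sup]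
    exact ⟨(eventually_lt_atBot R).mono fun y hy hy' => absurd hy' (not_le.2 hy),
      (hlim.eventually (ge_mem_nhds hvx)).mono fun y hy _ => hy⟩
  obtain ⟨m, hm, hmax⟩ := ContinuousOn.exists_isMaxOn'
    (fun y hy => (hv y hy).continuousAt.continuousWithinAt) isClosed_Ici hx hfar
  have hvm : 0 < v m := hvx.trans_le (hmax hx)
  have hRm : R < m := lt_of_le_of_ne hm (by rintro rfl; exact hR.not_gt hvm)
  have hlocmax : IsLocalMax v m := hmax.isLocalMax (Ici_mem_nhds hRm)
  have hderiv : deriv v =ᶠ[nhds m] v' :=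
    (lt_mem_nhds hRm).mono fun y hy => (hv y hy.le).deriv
  have hderiv2 : 0 < deriv (deriv v) m := by
    rw [hderiv.deriv_eq, (hv' m hRm).deriv]
    exact hpos m hRm hvm
  have hlocmin : IsLocalMin v m :=
    isLocalMin_of_deriv_deriv_pos hderiv2 hlocmax.deriv_eq_zero (hv m hm).continuousAt
  have hconst : v =ᶠ[nhds m] fun _ => v m := by
    filter_upwards [hlocmax, hlocmin] with y using le_antisymm
  simp [hconst.deriv.deriv_eq] at hderiv2

lemma le_mul_exp_neg_of_sq_mul_le_deriv2 {u u' u'' : ℝ → ℝ} {k R A : ℝ} (hk : 0 < k)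
    (hu : ∀ x ≥ R, HasDerivAt u (u' x) x) (hu' : ∀ x > R, HasDerivAt u' (u'' x) x)
    (hA : 0 ≤ A) (hR : u R ≤ A) (hlim : Tendsto u atTop (nhds 0))
    (hconv : ∀ x > R, 0 < u x → k ^ 2 * u x ≤ u'' x) :
    ∀ x ≥ R, u x ≤ A * Real.exp (-k * (x - R)) := by
  set e : ℝ → ℝ := fun x => Real.exp (-k * (x - R)) with he
  have he' (x : ℝ) : HasDerivAt e (-k * e x) x := by
    simpa [he, mul_comm] using (((hasDerivAt_id x).sub_const R).const_mul (-k)).exp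
  have he_lim : Tendsto e atTop (nhds 0) :=
    Real.tendsto_exp_atBot.comp <|
      (tendsto_atTop_add_const_right _ (-R) tendsto_id).const_mul_atTop_of_neg (neg_lt_zero.2 hk)
  have hbarrier := nonpos_of_tendsto_zero_of_deriv2_pos (R := R) (v := fun x => u x - A * e x)
    (fun x hx => (hu x hx).sub ((he' x).const_mul A))
    (fun x hx => (hu' x hx).sub (((he' x).const_mul (-k)).const_mul A))
    (by simpa [he] using hR) (by simpa using hlim.sub (he_lim.const_mul A))
    (fun x hx hpos => by
      have hux : 0 < u x := by
        have : 0 ≤ A * e x := mul_nonneg hA (Real.exp_pos _).le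
        linarith
      have : 0 < k ^ 2 * (u x - A * e x) := by positivity
      linarith [hconv x hx hux])
  exact fun x hx => sub_nonpos.1 (hbarrier x hx)

lemma abs_le_mul_exp_neg_of_sq_mul_sq_le {u u' u'' : ℝ → ℝ} {k R : ℝ} (hk : 0 < k)
    (hu : ∀ x ≥ R, HasDerivAt u (u' x) x) (hu' : ∀ x > R, HasDerivAt u' (u'' x) x)
    (hlim : Tendsto u atTop (nhds 0))
    (hconv : ∀ x > R, k ^ 2 * u x ^ 2 ≤ u x * u'' x) :
    ∀ x ≥ R, |u x| ≤ |u R| * Real.exp (-k * (x - R)) := by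
  intro x hx
  refine abs_le'.2 ⟨?_, ?_⟩
  · refine le_mul_exp_neg_of_sq_mul_le_deriv2 hk hu hu' (abs_nonneg _) (le_abs_self _) hlim
      (fun y hy hpos => ?_) x hx
    exact le_of_mul_le_mul_left (by linarith [hconv y hy]) hpos
  · refine le_mul_exp_neg_of_sq_mul_le_deriv2 (u := fun y => -u y) hk
      (fun y hy => (hu y hy).fun_neg) (fun y hy => (hu' y hy).fun_neg) (abs_nonneg _)
      (neg_le_abs _) (by simpa using hlim.neg) (fun y hy hpos => ?_) x hx
    exact le_of_mul_le_mul_left (by linarith [hconv y hy]) hpos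

lemma norm_deriv_le_of_norm_deriv2_le {E : Type*} [NormedAddCommGroup E] [NormedSpace ℝ E]
    {u u' u'' : ℝ → E} {x C : ℝ} (hu : ∀ y ∈ Icc x (x + 1), HasDerivAt u (u' y) y)
    (hu' : ∀ y ∈ Icc x (x + 1), HasDerivAt u' (u'' y) y)
    (hC : ∀ y ∈ Icc x (x + 1), ‖u'' y‖ ≤ C) :
    ‖u' x‖ ≤ ‖u (x + 1) - u x‖ + C := by
  have hleft : x ∈ Icc x (x + 1) := left_mem_Icc.2 (by linarith)
  have hright : x + 1 ∈ Icc x (x + 1) := right_mem_Icc.2 (by linarith)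
  have hosc : ∀ y ∈ Icc x (x + 1), ‖u' y - u' x‖ ≤ C := fun y hy => by
    have h := (convex_Icc x (x + 1)).norm_image_sub_le_of_norm_hasDerivWithin_le
      (fun z hz => (hu' z hz).hasDerivWithinAt) hC hleft hy
    have hdist : ‖y - x‖ ≤ 1 := by
      rw [Real.norm_eq_abs, abs_le]
      constructor <;> linarith [hy.1, hy.2]
    exact h.trans (mul_le_of_le_one_right ((norm_nonneg _).trans (hC x hleft)) hdist)
  have hlin := (convex_Icc x (x + 1)).norm_image_sub_le_of_norm_hasDerivWithin_le
    (f := fun y => u y - y • u' x) (f' := fun y => u' y - u' x)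
    (fun y hy => by
      simpa using ((hu y hy).fun_sub ((hasDerivAt_id y).smul_const (u' x))).hasDerivWithinAt)
    hosc hleft hright
  have hsplit : u' x = (u (x + 1) - u x)
      - (u (x + 1) - (x + 1) • u' x - (u x - x • u' x)) := by module
  calc ‖u' x‖ ≤ ‖u (x + 1) - u x‖ + ‖u (x + 1) - (x + 1) • u' x - (u x - x • u' x)‖ := by
        conv_lhs => rw [hsplit]
        exact norm_sub_le _ _
    _ ≤ ‖u (x + 1) - u x‖ + C := by simpa using hlin

lemma isBigO_deriv_of_isBigO_deriv2 {E : Type*} [NormedAddCommGroup E] [NormedSpace ℝ E]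
    {u u' u'' : ℝ → E} {g : ℝ → ℝ} (hu : ∀ x, HasDerivAt u (u' x) x)
    (hu' : ∀ x, HasDerivAt u' (u'' x) x) (hg : Antitone g) (hg0 : ∀ x, 0 ≤ g x)
    (hug : u =O[atTop] g) (hug'' : u'' =O[atTop] g) : u' =O[atTop] g := by
  obtain ⟨A, hA, hAu⟩ := hug.exists_nonneg
  obtain ⟨B, hB, hBu⟩ := hug''.exists_nonneg
  refine IsBigO.of_bound (A + A + B) ?_
  filter_upwards [eventually_forall_ge_atTop.2 hAu.bound,
    eventually_forall_ge_atTop.2 hBu.bound] with x hux hux''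
  simp only [Real.norm_of_nonneg (hg0 _)] at hux hux'' ⊢
  have hx1 : x ≤ x + 1 := by linarith
  have hC : ∀ y ∈ Icc x (x + 1), ‖u'' y‖ ≤ B * g x := fun y hy =>
    (hux'' y hy.1).trans (mul_le_mul_of_nonneg_left (hg hy.1) hB)
  have hdiff : ‖u (x + 1) - u x‖ ≤ A * g x + A * g x :=
    norm_sub_le_of_le ((hux _ hx1).trans (mul_le_mul_of_nonneg_left (hg hx1) hA)) (hux x le_rfl)
  calc ‖u' x‖ ≤ ‖u (x + 1) - u x‖ + B * g x :=
        norm_deriv_le_of_norm_deriv2_le (fun y _ => hu y) (fun y _ => hu' y) hC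
    _ ≤ (A + A + B) * g x := by linarith

lemma eventually_mul_sq_le_sub_mul {F : ℝ → ℝ} {l c b : ℝ} (hF : HasDerivAt F c l) (hFl : F l = 0)
    (hb : b < c) : ∀ᶠ y in nhds l, b * (y - l) ^ 2 ≤ (y - l) * F y := by
  filter_upwards [(hasDerivAt_iff_isLittleO.1 hF).def (sub_pos.2 hb)] with y hy
  rw [hFl, sub_zero, smul_eq_mul, Real.norm_eq_abs, Real.norm_eq_abs] at hy
  have hrem : |(y - l) * (F y - (y - l) * c)| ≤ (c - b) * (y - l) ^ 2 := by
    rw [abs_mul, ← sq_abs (y - l)]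
    nlinarith [mul_le_mul_of_nonneg_left hy (abs_nonneg (y - l))]
  linarith [neg_le_of_abs_le hrem]

variable {F θ θ' : ℝ → ℝ} {l c k : ℝ}

lemma isBigO_sub_exp_neg_of_hasDerivAt (hF : HasDerivAt F c l) (hFl : F l = 0)
    (hk : 0 < k) (hkc : k ^ 2 < c) (hθ : ∀ x, HasDerivAt θ (θ' x) x)
    (hθ' : ∀ x, HasDerivAt θ' (F (θ x)) x) (hlim : Tendsto θ atTop (nhds l)) :
    (fun x => θ x - l) =O[atTop] fun x => Real.exp (-k * x) := by
  obtain ⟨R, hR⟩ := eventually_atTop.1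
    (hlim.eventually (eventually_mul_sq_le_sub_mul hF hFl hkc))
  have hdecay := abs_le_mul_exp_neg_of_sq_mul_sq_le hk (fun x _ => (hθ x).sub_const l)
    (fun x _ => hθ' x) (by simpa using hlim.sub_const l) (fun x hx => hR x (le_of_lt hx))
  refine IsBigO.of_bound (|θ R - l| * Real.exp (k * R)) ?_
  filter_upwards [eventually_ge_atTop R] with x hx
  rw [Real.norm_eq_abs, Real.norm_of_nonneg (Real.exp_pos _).le, mul_assoc, ← Real.exp_add]
  convert hdecay x hx using 3
  ring

lemma isBigO_deriv_exp_neg_of_hasDerivAt (hF : HasDerivAt F c l) (hFl : F l = 0)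
    (hk : 0 < k) (hkc : k ^ 2 < c) (hθ : ∀ x, HasDerivAt θ (θ' x) x)
    (hθ' : ∀ x, HasDerivAt θ' (F (θ x)) x) (hlim : Tendsto θ atTop (nhds l)) :
    θ' =O[atTop] fun x => Real.exp (-k * x) := by
  have hsub := isBigO_sub_exp_neg_of_hasDerivAt hF hFl hk hkc hθ hθ' hlim
  have hF_lin : F =O[nhds l] fun y => y - l := by simpa [hFl] using hF.isBigO_sub
  exact isBigO_deriv_of_isBigO_deriv2 (fun x => (hθ x).sub_const l) hθ'
    (fun x y hxy => Real.exp_le_exp.2 (mul_le_mul_of_nonpos_left hxy (neg_nonpos.2 hk.le)))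
    (fun x => (Real.exp_pos _).le) hsub ((hF_lin.comp_tendsto hlim).trans hsub)

lemma exists_abs_le_mul_exp_neg_abs_of_isBigO {φ : ℝ → ℝ} (hφ : Continuous φ)
    (htop : φ =O[atTop] fun x => Real.exp (-k * x))
    (hbot : (fun x => φ (-x)) =O[atTop] fun x => Real.exp (-k * x)) :
    ∃ K, ∀ x, |φ x| ≤ K * Real.exp (-k * |x|) := by
  have hbound (ψ : ℝ → ℝ) (hψ : ψ =O[atTop] fun x => Real.exp (-k * x)) :
      (fun x => ψ x * Real.exp (k * |x|)) =O[atTop] (1 : ℝ → ℝ) := by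
    refine (hψ.mul (isBigO_refl (fun x => Real.exp (k * |x|)) atTop)).trans_eventuallyEq ?_
    filter_upwards [eventually_ge_atTop 0] with x hx
    simp [abs_of_nonneg hx, ← Real.exp_add]
  have hrange : Bornology.IsBounded (range fun x => φ x * Real.exp (k * |x|)) := by
    refine (Continuous.isBounded_range_iff_isBigO_atTop_atBot (by fun_prop)).2
      ⟨hbound φ htop, ?_⟩
    simpa only [Function.comp_def, neg_neg, abs_neg] using!
      (hbound _ hbot).comp_tendsto tendsto_neg_atBot_atTop
  obtain ⟨K, hK⟩ := isBounded_iff_forall_norm_le.1 hrange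
  refine ⟨K, fun x => ?_⟩
  have := hK _ (mem_range_self x)
  rw [Real.norm_eq_abs, abs_mul, Real.abs_exp] at this
  rwa [neg_mul, Real.exp_neg, ← div_eq_mul_inv, le_div_iff₀ (Real.exp_pos _)]

lemma exists_abs_deriv_le_mul_exp_neg_abs {l₁ l₂ : ℝ} (hθ : ContDiff ℝ 2 θ)
    (hODE : ∀ x, deriv (deriv θ) x = F (θ x)) (hF₁ : F l₁ = 0) (hF₂ : F l₂ = 0)
    (hF'₁ : 0 < deriv F l₁) (hF'₂ : 0 < deriv F l₂)
    (htop : Tendsto θ atTop (nhds l₁)) (hbot : Tendsto θ atBot (nhds l₂)) :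
    ∃ k > 0, ∃ K, ∀ x, |deriv θ x| ≤ K * Real.exp (-k * |x|) := by
  have hd1 (x : ℝ) : HasDerivAt θ (deriv θ x) x :=
    (hθ.differentiable two_ne_zero x).hasDerivAt
  have hd2 (x : ℝ) : HasDerivAt (deriv θ) (F (θ x)) x := by
    rw [← hODE x]
    exact (hθ.differentiable_deriv_two x).hasDerivAt
  have hF (l : ℝ) (h : 0 < deriv F l) : HasDerivAt F (deriv F l) l :=
    (differentiableAt_of_deriv_ne_zero h.ne').hasDerivAt
  obtain ⟨c, hc, hc_lt⟩ := exists_between (lt_min hF'₁ hF'₂)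
  obtain ⟨k, hk, hkc⟩ : ∃ k > 0, k ^ 2 < min (deriv F l₁) (deriv F l₂) :=
    ⟨√c, Real.sqrt_pos.2 hc, by rwa [Real.sq_sqrt hc.le]⟩
  refine ⟨k, hk, exists_abs_le_mul_exp_neg_abs_of_isBigO
    (continuous_iff_continuousAt.2 fun x => (hd2 x).continuousAt)
    (isBigO_deriv_exp_neg_of_hasDerivAt (hF _ hF'₁) hF₁ hk (hkc.trans_le (min_le_left _ _))
      hd1 hd2 htop) ?_⟩
  have hrefl := isBigO_deriv_exp_neg_of_hasDerivAt (hF _ hF'₂) hF₂ hk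
    (hkc.trans_le (min_le_right _ _)) (θ := fun x => θ (-x)) (θ' := fun x => -deriv θ (-x))
    (fun x => by simpa [Function.comp_def] using (hd1 (-x)).scomp x (hasDerivAt_neg x))
    (fun x => by simpa [Function.comp_def] using ((hd2 (-x)).scomp x (hasDerivAt_neg x)).fun_neg)
    (hbot.comp tendsto_neg_atTop_atBot)
  simpa using hrefl.neg_left

end Decay

section Slices

lemma integral_norm_le_sqrt_measureReal_mul_sqrt {α E : Type*} [MeasurableSpace α]
    [NormedAddCommGroup E] {μ : Measure α} [IsFiniteMeasure μ] {f : α → E} (hf : MemLp f 2 μ) :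
    ∫ x, ‖f x‖ ∂μ ≤ √(μ.real univ) * √(∫ x, ‖f x‖ ^ 2 ∂μ) := by
  have h := integral_mul_norm_le_Lp_mul_Lq (f := fun _ : α => (1 : ℝ)) (g := fun x => ‖f x‖)
    (μ := μ) Real.HolderConjugate.two_two (memLp_const 1) (by simpa using hf.norm)
  simpa [Real.sqrt_eq_rpow] using h

lemma norm_intervalIntegral_le_sqrt_abs_mul_sqrt {E : Type*} [NormedAddCommGroup E]
    [NormedSpace ℝ E] {S : Set ℝ} {a b : ℝ} {φ : ℝ → E} (hab : uIoc a b ⊆ S)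
    (hφ : MemLp φ 2 (volume.restrict S)) :
    ‖∫ x in a..b, φ x‖ ≤ √|b - a| * √(∫ x in S, ‖φ x‖ ^ 2) := by
  have hfin : IsFiniteMeasure (volume.restrict (uIoc a b)) := ⟨by simp [Real.volume_uIoc]⟩
  have hlen : (volume.restrict (uIoc a b)).real univ = |b - a| := by
    simp [measureReal_def, Real.volume_uIoc]
  calc ‖∫ x in a..b, φ x‖ ≤ ∫ x in uIoc a b, ‖φ x‖ :=
        intervalIntegral.norm_integral_le_integral_norm_uIoc
    _ ≤ √|b - a| * √(∫ x in uIoc a b, ‖φ x‖ ^ 2) :=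
        hlen ▸ integral_norm_le_sqrt_measureReal_mul_sqrt
          (hφ.mono_measure (Measure.restrict_mono hab le_rfl))
    _ ≤ √|b - a| * √(∫ x in S, ‖φ x‖ ^ 2) := by
        gcongr √|b - a| * √?_
        exact setIntegral_mono_set (hφ.integrable_norm_pow two_ne_zero)
          (ae_of_all _ fun x => sq_nonneg _) hab.eventuallyLE

/-- The `L²`-norm over `S` of the slice `W (·, y)`. -/
noncomputable def sliceNorm {Y : Type*} (S : Set ℝ) (W : ℝ × Y → ℝ) (y : Y) : ℝ :=
  √(∫ r in S, W (r, y) ^ 2)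

lemma sliceNorm_nonneg {Y : Type*} (S : Set ℝ) (W : ℝ × Y → ℝ) (y : Y) : 0 ≤ sliceNorm S W y :=
  Real.sqrt_nonneg _

lemma sq_sliceNorm {Y : Type*} (S : Set ℝ) (W : ℝ × Y → ℝ) (y : Y) :
    sliceNorm S W y ^ 2 = ∫ r in S, W (r, y) ^ 2 :=
  Real.sq_sqrt (integral_nonneg fun _ => sq_nonneg _)

variable {Y : Type*} [MeasurableSpace Y] {μ : Measure Y} [IsFiniteMeasure μ] {S : Set ℝ}
  {w W κ : ℝ × Y → ℝ} {Φ : ℝ → ℝ} {ε : ℝ}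

lemma memLp_sliceNorm (hW : MemLp W 2 ((volume.restrict S).prod μ)) :
    MemLp (sliceNorm S W) 2 μ := by
  have hint := hW.integrable_sq.integral_prod_right
  refine (memLp_two_iff_integrable_sq
    (Real.continuous_sqrt.comp_aestronglyMeasurable hint.aestronglyMeasurable)).2 ?_
  exact hint.congr (ae_of_all _ fun y => (sq_sliceNorm S W y).symm)

lemma integral_sliceNorm_le (hW : MemLp W 2 ((volume.restrict S).prod μ)) :
    ∫ y, sliceNorm S W y ∂μ
      ≤ √(μ.real univ) * √(∫ p, W p ^ 2 ∂(volume.restrict S).prod μ) := by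
  rw [integral_prod_symm _ hW.integrable_sq]
  simpa only [Real.norm_eq_abs, sq_abs, sq_sliceNorm, abs_of_nonneg (sliceNorm_nonneg S W _)]
    using integral_norm_le_sqrt_measureReal_mul_sqrt (memLp_sliceNorm hW)

lemma ae_abs_sub_le_sqrt_abs_mul_sliceNorm (hS : S.OrdConnected) (h0 : 0 ∈ S)
    (hW : MemLp W 2 ((volume.restrict S).prod μ))
    (hw : ∀ᵐ y ∂μ, ∀ r ∈ S, w (r, y) - w (0, y) = ∫ x in (0 : ℝ)..r, W (x, y)) :
    ∀ᵐ y ∂μ, ∀ r ∈ S, |w (r, y) - w (0, y)| ≤ √|r| * sliceNorm S W y := by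
  filter_upwards [hw, hW.1.prod_swap.prodMk_left, hW.integrable_sq.prod_left_ae]
    with y hwy hmeas hint r hr
  have hslice : MemLp (fun x => W (x, y)) 2 (volume.restrict S) :=
    (memLp_two_iff_integrable_sq hmeas).2 hint
  have hsub : uIoc 0 r ⊆ S := uIoc_subset_uIcc.trans (hS.uIcc_subset h0 hr)
  rw [hwy r hr]
  simpa [sliceNorm] using norm_intervalIntegral_le_sqrt_abs_mul_sqrt hsub hslice

lemma sqrt_abs_mul_comp_div (hε : 0 < ε) (Φ : ℝ → ℝ) :
    (fun r => √|r| * Φ (r / ε)) = fun r => √ε * (√|r / ε| * Φ (r / ε)) := by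
  ext r
  rw [← mul_assoc, ← Real.sqrt_mul hε.le, abs_div, abs_of_pos hε, mul_div_cancel₀ _ hε.ne']

lemma integrable_sqrt_abs_mul_comp_div (hε : 0 < ε) (hΦ : Integrable fun x => √|x| * Φ x) :
    Integrable fun r => √|r| * Φ (r / ε) := by
  rw [sqrt_abs_mul_comp_div hε]
  exact (hΦ.comp_div hε.ne').const_mul _

lemma integral_sqrt_abs_mul_comp_div (hε : 0 < ε) (Φ : ℝ → ℝ) :
    ∫ r, √|r| * Φ (r / ε) = ε ^ ((3 : ℝ) / 2) * ∫ x, √|x| * Φ x := by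
  have hpow : √ε * ε = ε ^ ((3 : ℝ) / 2) := by
    rw [Real.sqrt_eq_rpow, ← Real.rpow_add_one hε.ne']
    norm_num
  rw [sqrt_abs_mul_comp_div hε, integral_const_mul,
    Measure.integral_comp_div (fun x => √|x| * Φ x), abs_of_pos hε, smul_eq_mul, ← mul_assoc, hpow]

lemma ae_abs_sub_mul_le (hS : S.OrdConnected) (h0 : 0 ∈ S)
    (hκΦ : ∀ r y, |κ (r, y)| ≤ Φ (r / ε)) (hW : MemLp W 2 ((volume.restrict S).prod μ))
    (hw : ∀ᵐ y ∂μ, ∀ r ∈ S, w (r, y) - w (0, y) = ∫ x in (0 : ℝ)..r, W (x, y)) :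
    ∀ᵐ p ∂(volume.restrict S).prod μ,
      ‖|w p - w (0, p.2)| * κ p‖ ≤ √|p.1| * Φ (p.1 / ε) * sliceNorm S W p.2 := by
  filter_upwards [Measure.quasiMeasurePreserving_fst.ae (ae_restrict_mem hS.measurableSet),
    Measure.quasiMeasurePreserving_snd.ae (ae_abs_sub_le_sqrt_abs_mul_sliceNorm hS h0 hW hw)]
    with ⟨r, y⟩ hr hy
  calc ‖|w (r, y) - w (0, y)| * κ (r, y)‖ = |w (r, y) - w (0, y)| * |κ (r, y)| := by
        rw [norm_mul, Real.norm_eq_abs, abs_abs, Real.norm_eq_abs]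
    _ ≤ √|r| * sliceNorm S W y * Φ (r / ε) := by
        gcongr
        · exact mul_nonneg (Real.sqrt_nonneg _) (sliceNorm_nonneg S W y)
        · exact hy r hr
        · exact hκΦ r y
    _ = √|r| * Φ (r / ε) * sliceNorm S W y := by ring

lemma integral_abs_sub_mul_le (hε : 0 < ε) (hS : S.OrdConnected) (h0 : 0 ∈ S)
    (hΦ0 : ∀ x, 0 ≤ Φ x) (hΦ : Integrable fun x => √|x| * Φ x)
    (hκ : Measurable κ) (hκΦ : ∀ r y, |κ (r, y)| ≤ Φ (r / ε)) (hw_meas : Measurable w)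
    (hW : MemLp W 2 ((volume.restrict S).prod μ))
    (hw : ∀ᵐ y ∂μ, ∀ r ∈ S, w (r, y) - w (0, y) = ∫ x in (0 : ℝ)..r, W (x, y)) :
    ∫ r in S, ∫ y, |w (r, y) - w (0, y)| * κ (r, y) ∂μ
      ≤ (∫ x, √|x| * Φ x) * √(μ.real univ) * ε ^ ((3 : ℝ) / 2)
        * √(∫ p, W p ^ 2 ∂(volume.restrict S).prod μ) := by
  have hweight := integrable_sqrt_abs_mul_comp_div hε hΦ
  have hdom_int : Integrable (fun p : ℝ × Y => √|p.1| * Φ (p.1 / ε) * sliceNorm S W p.2)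
      ((volume.restrict S).prod μ) :=
    hweight.restrict.mul_prod ((memLp_sliceNorm hW).integrable one_le_two)
  have hdom := ae_abs_sub_mul_le hS h0 hκΦ hW hw
  have hint : Integrable (fun p => |w p - w (0, p.2)| * κ p) ((volume.restrict S).prod μ) :=
    hdom_int.mono' (by fun_prop) hdom
  have hweight_le : ∫ r in S, √|r| * Φ (r / ε) ≤ ε ^ ((3 : ℝ) / 2) * ∫ x, √|x| * Φ x :=
    integral_sqrt_abs_mul_comp_div hε Φ ▸ setIntegral_le_integral hweight
      (ae_of_all _ fun r => mul_nonneg (Real.sqrt_nonneg _) (hΦ0 _))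
  have hweight_nonneg : 0 ≤ ∫ x, √|x| * Φ x :=
    integral_nonneg fun x => mul_nonneg (Real.sqrt_nonneg _) (hΦ0 x)
  calc ∫ r in S, ∫ y, |w (r, y) - w (0, y)| * κ (r, y) ∂μ
      = ∫ p, |w p - w (0, p.2)| * κ p ∂(volume.restrict S).prod μ := (integral_prod _ hint).symm
    _ ≤ ∫ p, √|p.1| * Φ (p.1 / ε) * sliceNorm S W p.2 ∂(volume.restrict S).prod μ :=
        (le_abs_self _).trans (norm_integral_le_of_norm_le hdom_int hdom)
    _ = (∫ r in S, √|r| * Φ (r / ε)) * ∫ y, sliceNorm S W y ∂μ :=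
        integral_prod_mul (fun r => √|r| * Φ (r / ε)) (sliceNorm S W)
    _ ≤ (ε ^ ((3 : ℝ) / 2) * ∫ x, √|x| * Φ x)
          * (√(μ.real univ) * √(∫ p, W p ^ 2 ∂(volume.restrict S).prod μ)) :=
        mul_le_mul hweight_le (integral_sliceNorm_le hW)
          (integral_nonneg (sliceNorm_nonneg S W)) (by positivity)
    _ = (∫ x, √|x| * Φ x) * √(μ.real univ) * ε ^ ((3 : ℝ) / 2)
          * √(∫ p, W p ^ 2 ∂(volume.restrict S).prod μ) := by ring

end Slices

lemma integrable_sqrt_abs_mul_exp_neg {k : ℝ} (hk : 0 < k) :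
    Integrable fun x : ℝ => √|x| * Real.exp (-k * |x|) := by
  have hcont : Continuous fun x : ℝ => √|x| * Real.exp (-k * |x|) := by fun_prop
  have hIoi : IntegrableOn (fun x : ℝ => √|x| * Real.exp (-k * |x|)) (Ioi 0) := by
    refine (integrableOn_rpow_mul_exp_neg_mul_rpow (s := 1 / 2) (by norm_num) one_pos hk).congr_fun
      (fun x hx => ?_) measurableSet_Ioi
    simp only [abs_of_pos (mem_Ioi.1 hx), Real.sqrt_eq_rpow, Real.rpow_one]
  exact hcont.locallyIntegrable.integrable_of_isBigO_atTop_of_norm_isNegInvariant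
    (ae_of_all _ fun x => by simp) (Asymptotics.isBigO_refl _ _) ⟨Ioi 0, Ioi_mem_atTop 0, hIoi⟩

lemma sub_eq_intervalIntegral_fderiv_fst {E F : Type*} [NormedAddCommGroup E] [NormedSpace ℝ E]
    [NormedAddCommGroup F] [NormedSpace ℝ F] [CompleteSpace F] {w : ℝ × E → F}
    (hw : ContDiff ℝ 1 w) (a b : ℝ) (y : E) :
    w (b, y) - w (a, y) = ∫ x in a..b, fderiv ℝ w (x, y) (1, 0) := by
  refine (intervalIntegral.integral_eq_sub_of_hasDerivAt (f := fun x => w (x, y)) (fun x _ => ?_)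
    (Continuous.intervalIntegrable ?_ a b)).symm
  · exact (hw.differentiable one_ne_zero (x, y)).hasFDerivAt.comp_hasDerivAt x
      ((hasDerivAt_id x).prodMk (hasDerivAt_const x y))
  · have := hw.continuous_fderiv one_ne_zero
    fun_prop

lemma memLp_restrict_of_continuous_of_isBounded {X E : Type*} [PseudoMetricSpace X] [ProperSpace X]
    [SecondCountableTopology X] [MeasurableSpace X] [OpensMeasurableSpace X]
    [NormedAddCommGroup E] {μ : Measure X} [IsFiniteMeasureOnCompacts μ] {f : X → E} {s : Set X}
    (hf : Continuous f) (hs : Bornology.IsBounded s) (p : ENNReal) :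
    MemLp f p (μ.restrict s) := by
  have hK : IsCompact (closure s) := hs.isCompact_closure
  obtain ⟨C, hC⟩ := hK.exists_bound_of_continuousOn hf.continuousOn
  have := isFiniteMeasure_restrict.2 (hK.measure_lt_top (μ := μ)).ne
  have hmem : MemLp f p (μ.restrict (closure s)) :=
    MemLp.of_bound hf.aestronglyMeasurable C
      ((ae_restrict_mem isClosed_closure.measurableSet).mono hC)
  exact hmem.mono_measure (Measure.restrict_mono subset_closure le_rfl)

lemma abs_comp_sub_le_mul_exp_neg_abs {φ : ℝ → ℝ} {k K M x t : ℝ} (hk : 0 ≤ k)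
    (hφ : ∀ x, |φ x| ≤ K * Real.exp (-k * |x|)) (ht : |t| ≤ M) :
    |φ (x - t)| ≤ K * Real.exp (k * M) * Real.exp (-k * |x|) := by
  have hK : 0 ≤ K := nonneg_of_mul_nonneg_left ((abs_nonneg _).trans (hφ 0)) (Real.exp_pos _)
  have hx : |x| ≤ |x - t| + M := by linarith [abs_sub_abs_le_abs_sub x t]
  calc |φ (x - t)| ≤ K * Real.exp (-k * |x - t|) := hφ _
    _ ≤ K * Real.exp (k * M + -k * |x|) := by
        gcongr
        linarith [mul_le_mul_of_nonneg_left hx hk]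
    _ = K * Real.exp (k * M) * Real.exp (-k * |x|) := by rw [Real.exp_add, mul_assoc]

/-- Here `W` stands for `∂_r w`: a function in `H¹` has a representative that is absolutely
continuous on almost every slice, with its weak derivative as the integrand. -/
theorem trace_difference_profile_estimate_general {Y : Type*} [MeasurableSpace Y] (μ : Measure Y)
    [IsFiniteMeasure μ] {F θ : ℝ → ℝ} {l₁ l₂ : ℝ} (hθ : ContDiff ℝ 2 θ)
    (hODE : ∀ x, deriv (deriv θ) x = F (θ x)) (hF₁ : F l₁ = 0) (hF₂ : F l₂ = 0)
    (hF'₁ : 0 < deriv F l₁) (hF'₂ : 0 < deriv F l₂)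
    (htop : Tendsto θ atTop (nhds l₁)) (hbot : Tendsto θ atBot (nhds l₂)) (M : ℝ) :
    ∃ C > 0, ∀ S : Set ℝ, S.OrdConnected → 0 ∈ S →
      ∀ h : Y → ℝ, Measurable h → (∀ y, |h y| ≤ M) → ∀ ε > 0,
      ∀ w W : ℝ × Y → ℝ, Measurable w → MemLp W 2 ((volume.restrict S).prod μ) →
      (∀ᵐ y ∂μ, ∀ r ∈ S, w (r, y) - w (0, y) = ∫ x in (0 : ℝ)..r, W (x, y)) →
      ∫ r in S, ∫ y, |w (r, y) - w (0, y)| * deriv θ (r / ε - h y) ∂μ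
        ≤ C * ε ^ ((3 : ℝ) / 2) * √(∫ p, W p ^ 2 ∂(volume.restrict S).prod μ) := by
  obtain ⟨k, hk, K, hK⟩ :=
    exists_abs_deriv_le_mul_exp_neg_abs hθ hODE hF₁ hF₂ hF'₁ hF'₂ htop hbot
  have hK0 : 0 ≤ K := nonneg_of_mul_nonneg_left ((abs_nonneg _).trans (hK 0)) (Real.exp_pos _)
  set Φ : ℝ → ℝ := fun x => K * Real.exp (k * M) * Real.exp (-k * |x|)
  have hΦ0 (x : ℝ) : 0 ≤ Φ x := by positivity
  have hΦ : Integrable fun x => √|x| * Φ x :=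
    ((integrable_sqrt_abs_mul_exp_neg hk).const_mul (K * Real.exp (k * M))).congr
      (ae_of_all _ fun x => by ring)
  refine ⟨(∫ x, √|x| * Φ x) * √(μ.real univ) + 1, by positivity,
    fun S hS h0 h hh hhM ε hε w W hw_meas hW hw => ?_⟩
  have hκ : Measurable fun p : ℝ × Y => deriv θ (p.1 / ε - h p.2) :=
    (measurable_deriv θ).comp (by fun_prop)
  refine (integral_abs_sub_mul_le hε hS h0 hΦ0 hΦ hκ
    (fun r y => abs_comp_sub_le_mul_exp_neg_abs hk.le hK (hhM y)) hw_meas hW hw).trans ?_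
  gcongr
  exact le_add_of_nonneg_right zero_le_one

/-- Trace-difference estimate against the profile derivative, in coordinates:
∫∫ |w(r,s) - w(0,s)| θ₀'(r/ε - h(s)) ds dr ≤ C ε^{3/2} ‖∂_r w‖_{L²}, formulated for
functions on ℝ² that are 1-periodic in the second (tangential) variable. -/
theorem trace_difference_profile_estimate
    (f : ℝ → ℝ)
    (hf : ContDiff ℝ (⊤ : ℕ∞) f)
    (hfeven : ∀ x, f (-x) = f x)
    (hf1 : f 1 = 0) (hfm1 : f (-1) = 0)
    (hf'1 : deriv f 1 = 0) (hf'm1 : deriv f (-1) = 0)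
    (hf''1 : 0 < iteratedDeriv 2 f 1) (hf''m1 : 0 < iteratedDeriv 2 f (-1))
    (hfpos : ∀ x ∈ Set.Ioo (-1:ℝ) 1, 0 < f x)
    (θ₀ : ℝ → ℝ)
    (hθreg : ContDiff ℝ 2 θ₀)
    (hODE : ∀ ρ, deriv (deriv θ₀) ρ = deriv f (θ₀ ρ))
    (hlimtop : Tendsto θ₀ atTop (nhds 1))
    (hlimbot : Tendsto θ₀ atBot (nhds (-1)))
    (hzero : θ₀ 0 = 0)
    (δ M : ℝ) (hδ : 0 < δ) (hM : 0 < M) :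
    ∃ C > 0, ∀ h : ℝ → ℝ, Measurable h → (∀ s, h (s + 1) = h s) → (∀ s, |h s| ≤ M) →
      ∀ ε : ℝ, ε ∈ Ioc (0:ℝ) 1 →
      ∀ w : ℝ × ℝ → ℝ, ContDiff ℝ 1 w → (∀ r s : ℝ, w (r, s + 1) = w (r, s)) →
      (∫ r in Ioo (-(2*δ)) (2*δ), ∫ s in Ioo (0:ℝ) 1,
          |w (r, s) - w (0, s)| * deriv θ₀ (r/ε - h s))
        ≤ C * ε ^ ((3:ℝ)/2) *
          Real.sqrt (∫ p in (Ioo (-(2*δ)) (2*δ)) ×ˢ (Ioo (0:ℝ) 1),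
            (fderiv ℝ w p (1, 0)) ^ 2) := by
  obtain ⟨C, hC, hbound⟩ := trace_difference_profile_estimate_general
    (volume.restrict (Ioo (0 : ℝ) 1)) hθreg hODE hf'1 hf'm1
    (by simpa only [iteratedDeriv_succ, iteratedDeriv_zero] using hf''1)
    (by simpa only [iteratedDeriv_succ, iteratedDeriv_zero] using hf''m1) hlimtop hlimbot M
  refine ⟨C, hC, fun h hh _ hhM ε hε w hw _ => ?_⟩
  have hfderiv : Continuous fun p => fderiv ℝ w p (1, 0) :=
    (hw.continuous_fderiv one_ne_zero).clm_apply continuous_const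
  have hLp := memLp_restrict_of_continuous_of_isBounded (μ := volume) hfderiv
    ((Metric.isBounded_Ioo (-(2 * δ)) (2 * δ)).prod (Metric.isBounded_Ioo 0 1)) 2
  rw [Measure.volume_eq_prod, ← Measure.prod_restrict] at hLp ⊢
  exact hbound _ ordConnected_Ioo ⟨by linarith, by linarith⟩ h hh hhM ε hε.1 w _
    hw.continuous.measurable hLp
    (ae_of_all _ fun s r _ => sub_eq_intervalIntegral_fderiv_fst hw 0 r s)
end
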